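/- arXiv:2507.03651 — 2 statements merged into one kernel-verified Lean document; each statement's English description precedes it below -/
import Mathlib

section
/- Let m₁, μ₃, μ₄ ∈ ℝ and for n ∈ ℕ define s⁴¹(n) = ∑ over all pairs (π, s) with π : Fin 4 → Equiv.Perm (Fin n) and s : Fin 4 → Option (Fin n) such that there exists a column i ∈ Fin n with s j = some i for all j ∈ Fin 4 (i.e., all four rows are marked and all four marks lie in one column), of ( ∏_{j} sgn(π j) ) · ∏_{i ∈ Fin n} ( m₁^{a(i)} · ∏_{l ∈ Fin n} c_{b(i,l)} ), where a(i) = #{ j | s j = some i }, b(i,l) = #{ j | s j ≠ some i ∧ (π j) i = l }, and c₀ = 1, c₁ = 0, c₂ = 1, c₃ = μ₃, c₄ = μ₄. Then for every t ∈ ℝ with |t| < 1, the series ∑_{n=0}^∞ s⁴¹(n)·tⁿ/(n!)² converges (HasSum) with sum m₁⁴·t·(1 + 2t)·exp(t·(μ₄ − 3)) / (1 − t)⁴. -/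
/-!
Write `μ4 = κ + 3`, and let `x` be a vector of independent entries with moments `1, 0, 1, μ3, κ + 3`
up to order four. The moments exist for a *signed* five-point law on `0, ±1, ±2`, so every
expectation below is a finite weighted sum, and no positivity of the weights is needed.

If all four marks sit in column `i`, that column contributes `m1 ^ 4`, and the signed sum over the
four permutations is `m1 ^ 4 * E[det ^ 4]`, where the matrix has a row of ones in position `i` and
independent random entries elsewhere (`sum_markedWeight_eq`). The fourth power does not see the
position `i`, so one studies `detE`: the expectation of `det ^ 4` with the ones in the top row and
a possibly different value of `κ` in each random row.

*Removing `κ`.* The determinant is linear in a given row, and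
`E[(∑ φ l * x l) ^ 4] = 3 * (∑ φ l ^ 2) ^ 2 + κ * ∑ φ l ^ 4`. The first term is the value for
`κ = 0`; the second one is a sum over the minors with that row and one column deleted, which have
the same shape. This is the recursion `detE_rec`, and iterating it expresses `detE` through the
values at `κ = 0` (`detE_stepVar`).

*The case `κ = 0`.* The fourth moments are those of a Gaussian vector. Rewrite `det ^ 4` as the
square of the Gram determinant and integrate out one row at a time: given `k` rows `A`, the Gram
determinant of `A` and `x` is `gram A` times `x P xᵀ`, with `P` the orthogonal projection onto the
complement of the rows, and `E[(x P xᵀ) ^ 2] = (tr P) ^ 2 + 2 * tr P = d * (d + 2)` for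
`d = n - k`. Hence `E[det ^ 4] = n ^ 2 * ∏_{1 ≤ d < n} d * (d + 2)` (`detE_zero`).

Collecting factorials, the `n`-th term of the series is `m1 ^ 4` times the `n`-th coefficient of the
Cauchy product of `∑ (t κ) ^ j / j!` and `∑ p ^ 2 (p + 1) / 2 * t ^ p`, whose sums are
`exp (t κ)` and `t (1 + 2 t) / (1 - t) ^ 4`.
-/

/-- Column weights: `c₀ = 1`, `c₁ = 0`, `c₂ = 1`, `c₃ = μ₃`, `c₄ = μ₄`
(the value for `r > 4` is irrelevant since a column of a 4-table has 4 entries). -/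
noncomputable def colWeight (μ3 μ4 : ℝ) : ℕ → ℝ
  | 0 => 1
  | 1 => 0
  | 2 => 1
  | 3 => μ3
  | 4 => μ4
  | _ => 0

/-- The marked weight of a marked 4-table `(π, s)`. -/
noncomputable def markedWeight (m1 μ3 μ4 : ℝ) {n : ℕ}
    (π : Fin 4 → Equiv.Perm (Fin n)) (s : Fin 4 → Option (Fin n)) : ℝ :=
  (∏ j : Fin 4, ((Equiv.Perm.sign (π j) : ℤ) : ℝ)) *
    ∏ i : Fin n,
      (m1 ^ (Finset.univ.filter (fun j : Fin 4 => s j = some i)).card *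
        ∏ l : Fin n,
          colWeight μ3 μ4
            (Finset.univ.filter (fun j : Fin 4 => s j ≠ some i ∧ (π j) i = l)).card)

namespace S41

open Finset

/-! ### A signed law with prescribed moments -/

/-- Support of the five-point law. -/
noncomputable def node : Fin 5 → ℝ := ![0, 1, -1, 2, -2]

/-- Weights on `node` of the signed law with moments `1, 0, 1, μ3, κ + 3` of orders `0` to `4`,
found by solving the Vandermonde system. They may be negative. -/
noncomputable def wt (μ3 κ : ℝ) : Fin 5 → ℝ :=
  ![(κ + 2) / 4, (1 - μ3 - κ) / 6, (1 + μ3 - κ) / 6,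
    (2 + 2 * μ3 + κ) / 24, (2 - 2 * μ3 + κ) / 24]

theorem sum_wt_mul_pow (μ3 κ : ℝ) (r : ℕ) (hr : r ≤ 4) :
    ∑ k, wt μ3 κ k * node k ^ r = colWeight μ3 (κ + 3) r := by
  interval_cases r <;> simp [Fin.sum_univ_five, wt, node, colWeight] <;> ring

theorem sum_wt (μ3 κ : ℝ) : ∑ k, wt μ3 κ k = 1 := by
  simpa [colWeight] using sum_wt_mul_pow μ3 κ 0 (by norm_num)

/-- Expectation of `f` at a vector with independent entries of law `wt μ3 κ`. -/
noncomputable def rowE (μ3 κ : ℝ) {n : ℕ} (f : (Fin n → ℝ) → ℝ) : ℝ :=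
  ∑ x : Fin n → Fin 5, (∏ l, wt μ3 κ (x l)) * f (fun l => node (x l))

/-- Expectation of `f` at a matrix with independent entries, those of row `i` having law
`wt μ3 (κ i)`. -/
noncomputable def matE (μ3 : ℝ) {m n : ℕ} (κ : Fin m → ℝ) (f : (Fin m → Fin n → ℝ) → ℝ) : ℝ :=
  ∑ X : Fin m → Fin n → Fin 5,
    (∏ i, ∏ l, wt μ3 (κ i) (X i l)) * f (fun i l => node (X i l))

theorem rowE_prod (μ3 κ : ℝ) {n : ℕ} (g : Fin n → ℝ → ℝ) :
    rowE μ3 κ (fun x => ∏ l, g l (x l)) = ∏ l, ∑ k, wt μ3 κ k * g l (node k) := by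
  rw [Finset.prod_univ_sum, Fintype.piFinset_univ]
  simp [rowE, Finset.prod_mul_distrib]

theorem matE_prod (μ3 : ℝ) {m n : ℕ} (κ : Fin m → ℝ) (g : Fin m → (Fin n → ℝ) → ℝ) :
    matE μ3 κ (fun X => ∏ i, g i (X i)) = ∏ i, rowE μ3 (κ i) (g i) := by
  simp only [rowE]
  rw [Finset.prod_univ_sum, Fintype.piFinset_univ]
  simp [matE, Finset.prod_mul_distrib]

theorem rowE_sum (μ3 κ : ℝ) {n : ℕ} {ι : Type*} (s : Finset ι) (f : ι → (Fin n → ℝ) → ℝ) :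
    rowE μ3 κ (fun x => ∑ a ∈ s, f a x) = ∑ a ∈ s, rowE μ3 κ (f a) := by
  simp only [rowE, Finset.mul_sum]
  exact Finset.sum_comm

theorem rowE_mul_left (μ3 κ c : ℝ) {n : ℕ} (f : (Fin n → ℝ) → ℝ) :
    rowE μ3 κ (fun x => c * f x) = c * rowE μ3 κ f := by
  simp only [rowE, Finset.mul_sum]
  exact Finset.sum_congr rfl fun x _ => by ring

theorem matE_sum (μ3 : ℝ) {m n : ℕ} (κ : Fin m → ℝ) {ι : Type*} (s : Finset ι)
    (f : ι → (Fin m → Fin n → ℝ) → ℝ) :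
    matE μ3 κ (fun X => ∑ a ∈ s, f a X) = ∑ a ∈ s, matE μ3 κ (f a) := by
  simp only [matE, Finset.mul_sum]
  exact Finset.sum_comm

theorem matE_mul_left (μ3 c : ℝ) {m n : ℕ} (κ : Fin m → ℝ) (f : (Fin m → Fin n → ℝ) → ℝ) :
    matE μ3 κ (fun X => c * f X) = c * matE μ3 κ f := by
  simp only [matE, Finset.mul_sum]
  exact Finset.sum_congr rfl fun x _ => by ring

theorem matE_add (μ3 : ℝ) {m n : ℕ} (κ : Fin m → ℝ) (f g : (Fin m → Fin n → ℝ) → ℝ) :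
    matE μ3 κ (fun X => f X + g X) = matE μ3 κ f + matE μ3 κ g := by
  simp only [matE, mul_add, Finset.sum_add_distrib]

/-- Row `i` can be integrated out first, the others being held fixed. -/
theorem matE_insertNth (μ3 : ℝ) {m n : ℕ} (κ : Fin (m + 1) → ℝ) (i : Fin (m + 1))
    (f : (Fin (m + 1) → Fin n → ℝ) → ℝ) :
    matE μ3 κ f = matE μ3 (fun k => κ (i.succAbove k)) (fun X =>
      rowE μ3 (κ i) (fun x => f (i.insertNth x X))) := by
  simp only [matE, rowE, Finset.mul_sum]
  rw [← (Fin.insertNthEquiv (fun _ => Fin n → Fin 5) i).sum_comp, Fintype.sum_prod_type,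
    Finset.sum_comm]
  refine Finset.sum_congr rfl fun X _ => Finset.sum_congr rfl fun x _ => ?_
  have h : (fun (k : Fin (m + 1)) l =>
      node ((Fin.insertNthEquiv (fun _ => Fin n → Fin 5) i) (x, X) k l))
      = i.insertNth (fun l => node (x l)) (fun k l => node (X k l)) := by
    funext k
    refine Fin.succAboveCases i ?_ (fun k => ?_) k <;> simp
  rw [h, Fin.prod_univ_succAbove _ i]
  simp
  ring

/-- A column on which the integrand does not depend can be dropped, as the weights sum to `1`. -/
theorem matE_removeCol (μ3 : ℝ) {m n : ℕ} (κ : Fin m → ℝ) (c : Fin (n + 1))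
    (f : (Fin m → Fin n → ℝ) → ℝ) :
    matE μ3 κ (fun X : Fin m → Fin (n + 1) → ℝ => f (fun i l => X i (c.succAbove l)))
      = matE μ3 κ f := by
  let e : (Fin m → Fin 5) × (Fin m → Fin n → Fin 5) ≃ (Fin m → Fin (n + 1) → Fin 5) :=
    (Equiv.arrowProdEquivProdArrow (Fin m) (fun _ => Fin 5) (fun _ => Fin n → Fin 5)).symm.trans
      (Equiv.piCongrRight fun _ => Fin.insertNthEquiv (fun _ => Fin 5) c)
  have he : ∀ y X i, e (y, X) i = c.insertNth (y i) (X i) := fun y X i => rfl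
  have h1 : ∑ y : Fin m → Fin 5, ∏ i, wt μ3 (κ i) (y i) = 1 := by
    have := Finset.prod_univ_sum (fun _ : Fin m => (univ : Finset (Fin 5)))
      (fun i k => wt μ3 (κ i) k)
    rw [Fintype.piFinset_univ] at this
    rw [← this]
    simp [sum_wt]
  simp only [matE]
  rw [← e.sum_comp, Fintype.sum_prod_type, Finset.sum_comm]
  refine Finset.sum_congr rfl fun X _ => ?_
  simp only [he, Fin.prod_univ_succAbove _ c, Fin.insertNth_apply_same,
    Fin.insertNth_apply_succAbove, Finset.prod_mul_distrib]
  rw [← Finset.sum_mul, ← Finset.sum_mul, h1, one_mul]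

/-! ### Fourth moments of a random row -/

/-- The column weight of four entries is a sum over the three pairings plus `κ` for the coincidence
of all four. In particular it does not depend on `μ3`: a value taken three times forces another one
taken once, which has weight `0`. -/
theorem prod_colWeight (μ3 κ : ℝ) {n : ℕ} (a b c d : Fin n) :
    ∏ l : Fin n, colWeight μ3 (κ + 3)
      (univ.filter (fun j : Fin 4 => (![a, b, c, d] : Fin 4 → Fin n) j = l)).card
    = (if a = b ∧ c = d then 1 else 0) + (if a = c ∧ b = d then 1 else 0)
      + (if a = d ∧ b = c then 1 else 0) + (if a = b ∧ a = c ∧ a = d then κ else 0) := by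
  have h : ∀ l, (univ.filter (fun j : Fin 4 => (![a, b, c, d] : Fin 4 → Fin n) j = l)).card
      = (if a = l then 1 else 0) + (if b = l then 1 else 0) + (if c = l then 1 else 0)
        + (if d = l then 1 else 0) := by
    intro l
    rw [Finset.card_filter, Fin.sum_univ_four]
    rfl
  simp only [h]
  clear h
  -- Only the values `a, b, c, d` matter; go through the coincidences among them.
  rw [← Finset.prod_subset (Finset.subset_univ ({a, b, c, d} : Finset (Fin n)))]
  · by_cases hab : a = b <;> by_cases hac : a = c <;> by_cases had : a = d <;>
    by_cases hbc : b = c <;> by_cases hbd : b = d <;> by_cases hcd : c = d <;>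
      first
      | (exfalso; simp_all; done)
      | (subst_vars; simp_all [colWeight, eq_comm]; done)
      | (subst_vars; simp_all [colWeight, eq_comm]; ring)
  · intro l _ hl
    simp only [Finset.mem_insert, Finset.mem_singleton, not_or] at hl
    simp [colWeight, Ne.symm hl.1, Ne.symm hl.2.1, Ne.symm hl.2.2.1, Ne.symm hl.2.2.2]

theorem rowE_prod_four (μ3 κ : ℝ) {n : ℕ} (v : Fin 4 → Fin n) :
    rowE μ3 κ (fun x => ∏ j, x (v j)) = ∏ l : Fin n, colWeight μ3 (κ + 3)
      (univ.filter (fun j : Fin 4 => v j = l)).card := by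
  have h : ∀ x : Fin n → ℝ, ∏ j, x (v j)
      = ∏ l, x l ^ (univ.filter (fun j : Fin 4 => v j = l)).card := by
    intro x
    rw [← Finset.prod_fiberwise univ v]
    refine Finset.prod_congr rfl fun l _ => ?_
    rw [Finset.prod_congr rfl (g := fun _ => x l), Finset.prod_const]
    intro j hj
    rw [(Finset.mem_filter.1 hj).2]
  simp only [h]
  rw [rowE_prod μ3 κ (fun l y => y ^ (univ.filter (fun j : Fin 4 => v j = l)).card)]
  refine Finset.prod_congr rfl fun l _ => sum_wt_mul_pow μ3 κ _ ?_
  exact (Finset.card_le_univ _).trans (by simp)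

theorem rowE_four (μ3 κ : ℝ) {n : ℕ} (a b c d : Fin n) :
    rowE μ3 κ (fun x => x a * x b * x c * x d)
    = (if a = b ∧ c = d then 1 else 0) + (if a = c ∧ b = d then 1 else 0)
      + (if a = d ∧ b = c then 1 else 0) + (if a = b ∧ a = c ∧ a = d then κ else 0) := by
  rw [← prod_colWeight μ3, ← rowE_prod_four μ3 κ ![a, b, c, d]]
  simp [Fin.prod_univ_four]

theorem rowE_bilin_sq (μ3 κ : ℝ) {n : ℕ} (M : Matrix (Fin n) (Fin n) ℝ) :
    rowE μ3 κ (fun x => (∑ a, ∑ b, M a b * (x a * x b)) ^ 2)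
      = M.trace ^ 2 + (M * M.transpose).trace + (M * M).trace + κ * ∑ a, M a a ^ 2 := by
  have h : ∀ x : Fin n → ℝ, (∑ a, ∑ b, M a b * (x a * x b)) ^ 2
      = ∑ a, ∑ b, ∑ c, ∑ d, M a b * M c d * (x a * x b * x c * x d) := by
    intro x
    rw [sq, Finset.sum_mul_sum]
    refine Finset.sum_congr rfl fun a _ => ?_
    simp only [Finset.sum_mul_sum]
    rw [Finset.sum_comm]
    refine Finset.sum_congr rfl fun b _ => Finset.sum_congr rfl fun c _ =>
      Finset.sum_congr rfl fun d _ => by ring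
  simp only [h, rowE_sum, rowE_mul_left, rowE_four]
  simp only [mul_add, Finset.sum_add_distrib, ite_and, mul_ite, mul_one, mul_zero]
  congr 1
  · congr 1
    · congr 1
      · simp [Matrix.trace, sq, Finset.sum_mul_sum]
      · simp [Matrix.trace, Matrix.mul_apply]
    · simp [Matrix.trace, Matrix.mul_apply]
  · simp [Finset.mul_sum, sq, mul_comm]

/-! ### Gram determinants and the case `κ = 0` -/

/-- Gram determinant of the rows of `A`. -/
noncomputable def gram {k n : ℕ} (A : Fin k → Fin n → ℝ) : ℝ :=
  (Matrix.of A * (Matrix.of A).transpose).det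

/-- The Gram matrix with an extra row, in block form. -/
theorem gram_snoc_eq_det {k n : ℕ} (A : Fin k → Fin n → ℝ) (x : Fin n → ℝ) :
    gram (Fin.snoc A x : Fin (k + 1) → Fin n → ℝ) =
      (Matrix.fromBlocks (Matrix.of A * (Matrix.of A).transpose)
        (Matrix.of A * (Matrix.of fun _ : Fin 1 => x).transpose)
        ((Matrix.of fun _ : Fin 1 => x) * (Matrix.of A).transpose)
        ((Matrix.of fun _ : Fin 1 => x) * (Matrix.of fun _ : Fin 1 => x).transpose)).det := by
  have h : Matrix.fromRows (Matrix.of A) (Matrix.of fun _ : Fin 1 => x)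
      = (Matrix.of (Fin.snoc A x : Fin (k + 1) → Fin n → ℝ)).submatrix finSumFinEquiv id := by
    ext (i | i) j
    · have : Fin.castAdd 1 i = i.castSucc := rfl
      simp [this]
    · have : Fin.natAdd k i = Fin.last k := by
        ext; simp
      simp [this]
  rw [← Matrix.fromRows_mul_fromCols, ← Matrix.transpose_fromRows, h, Matrix.transpose_submatrix,
    ← Matrix.submatrix_mul _ _ _ _ _ Function.bijective_id, Matrix.det_submatrix_equiv_self]
  rfl

theorem gram_snoc_of_gram_eq_zero {k n : ℕ} (A : Fin k → Fin n → ℝ) (x : Fin n → ℝ)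
    (h : gram A = 0) : gram (Fin.snoc A x : Fin (k + 1) → Fin n → ℝ) = 0 := by
  obtain ⟨v, hv, hvA⟩ := Matrix.exists_vecMul_eq_zero_iff.2 h
  have hA : Matrix.vecMul v (Matrix.of A) = 0 := by
    rw [← Matrix.conjTranspose_eq_transpose_of_trivial] at hvA
    exact (Matrix.vecMul_self_mul_conjTranspose_eq_zero _ _).1 hvA
  rw [gram_snoc_eq_det]
  refine Matrix.exists_vecMul_eq_zero_iff.1 ⟨Sum.elim v 0, ?_, ?_⟩
  · intro h0
    exact hv (funext fun i => congrFun h0 (Sum.inl i))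
  · rw [Matrix.vecMul_fromBlocks]
    simp [← Matrix.vecMul_vecMul, hA]

/-- The Gram determinant with an extra row `x` is `gram A` times the quadratic form at `x` of the
orthogonal projection onto the complement of the row space; the properties of
`P` are asserted only for independent rows, since otherwise `P` is irrelevant. It comes from the Schur complement of `A * Aᵀ`. -/
theorem exists_gram_snoc_eq {k n : ℕ} (A : Fin k → Fin n → ℝ) :
    ∃ P : Matrix (Fin n) (Fin n) ℝ,
      (∀ x, gram (Fin.snoc A x : Fin (k + 1) → Fin n → ℝ)
        = ∑ a, ∑ b, (gram A • P) a b * (x a * x b)) ∧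
      (gram A ≠ 0 → P.transpose = P ∧ P * P = P ∧ P.trace = (n : ℝ) - k) := by
  by_cases hg : gram A = 0
  · exact ⟨0, fun x => by simp [gram_snoc_of_gram_eq_zero A x hg], fun h => absurd hg h⟩
  have hu : IsUnit (Matrix.of A * (Matrix.of A).transpose).det := isUnit_iff_ne_zero.2 hg
  set B := Matrix.of A * (Matrix.of A).transpose with hB
  have hBt : B.transpose = B := by simp [hB]
  refine ⟨1 - (Matrix.of A).transpose * B⁻¹ * Matrix.of A, fun x => ?_, fun _ => ⟨?_, ?_, ?_⟩⟩
  · rw [gram_snoc_eq_det]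
    let _ := Matrix.invertibleOfIsUnitDet _ hu
    rw [Matrix.det_fromBlocks₁₁, Matrix.det_fin_one, Matrix.invOf_eq_nonsing_inv]
    set R : Matrix (Fin 1) (Fin n) ℝ := Matrix.of fun _ => x with hR
    have h1 : R * R.transpose - R * (Matrix.of A).transpose * B⁻¹ * (Matrix.of A * R.transpose)
        = R * (1 - (Matrix.of A).transpose * B⁻¹ * Matrix.of A) * R.transpose := by
      simp only [Matrix.mul_sub, Matrix.sub_mul, Matrix.mul_one, Matrix.mul_assoc]
    have h2 : ∀ Q : Matrix (Fin n) (Fin n) ℝ,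
        (R * Q * R.transpose) 0 0 = ∑ a, ∑ b, Q a b * (x a * x b) := by
      intro Q
      rw [Finset.sum_comm]
      simp only [Matrix.mul_apply, Finset.sum_mul, hR, Matrix.of_apply, Matrix.transpose_apply]
      exact Finset.sum_congr rfl fun b _ => Finset.sum_congr rfl fun a _ => by ring
    rw [h1, h2, Finset.mul_sum]
    refine Finset.sum_congr rfl fun a _ => ?_
    rw [Finset.mul_sum]
    refine Finset.sum_congr rfl fun b _ => ?_
    rw [Matrix.smul_apply, smul_eq_mul, mul_assoc]
    rfl
  · simp [Matrix.transpose_nonsing_inv, hBt, Matrix.mul_assoc]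
  · have : (Matrix.of A).transpose * B⁻¹ * Matrix.of A * ((Matrix.of A).transpose * B⁻¹ * Matrix.of A)
        = (Matrix.of A).transpose * B⁻¹ * Matrix.of A := by
      calc _ = (Matrix.of A).transpose * (B⁻¹ * B) * B⁻¹ * Matrix.of A := by
              simp only [hB, Matrix.mul_assoc]
        _ = _ := by rw [Matrix.nonsing_inv_mul _ hu, Matrix.mul_one]
    rw [Matrix.sub_mul, Matrix.mul_sub, Matrix.mul_sub, this]
    simp
  · rw [Matrix.trace_sub, Matrix.trace_mul_comm, ← Matrix.mul_assoc, ← hB, Matrix.mul_nonsing_inv _ hu]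
    simp

theorem rowE_gram_snoc_sq (μ3 : ℝ) {k n : ℕ} (A : Fin k → Fin n → ℝ) :
    rowE μ3 0 (fun x => gram (Fin.snoc A x : Fin (k + 1) → Fin n → ℝ) ^ 2)
      = ((n : ℝ) - k) * ((n : ℝ) - k + 2) * gram A ^ 2 := by
  obtain ⟨P, hP, h⟩ := exists_gram_snoc_eq A
  simp only [hP, rowE_bilin_sq]
  by_cases hg : gram A = 0
  · simp [hg]
  obtain ⟨h1, h2, h3⟩ := h hg
  simp only [Matrix.transpose_smul, h1, Matrix.trace_smul, h3, Matrix.smul_mul, Matrix.mul_smul, h2,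
    smul_eq_mul]
  ring

theorem matE_gram_sq (μ3 : ℝ) (m n : ℕ) :
    matE μ3 (fun _ : Fin m => 0)
      (fun X => gram (Fin.cons 1 X : Fin (m + 1) → Fin n → ℝ) ^ 2)
      = (n : ℝ) ^ 2 * ∏ d ∈ range m, ((n : ℝ) - (d + 1)) * ((n : ℝ) - (d + 1) + 2) := by
  induction m with
  | zero =>
    simp [matE, gram, Matrix.mul_apply]
  | succ m ih =>
    rw [matE_insertNth _ _ (Fin.last m)]
    simp only [Fin.insertNth_last', Fin.cons_snoc_eq_snoc_cons, rowE_gram_snoc_sq, matE_mul_left, ih]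
    rw [Finset.prod_range_succ]
    push_cast
    ring

theorem prod_range_eq_factorial (m : ℕ) :
    ∏ d ∈ range m, (((m + 1 : ℕ) : ℝ) - (d + 1)) * (((m + 1 : ℕ) : ℝ) - (d + 1) + 2)
      = m.factorial * (m + 2).factorial / 2 := by
  induction m with
  | zero => simp
  | succ m ih =>
    rw [Finset.prod_range_succ']
    have : ∀ d : ℕ, (((m + 1 + 1 : ℕ) : ℝ) - (((d + 1 : ℕ) : ℝ) + 1))
        = ((m + 1 : ℕ) : ℝ) - (d + 1) := by
      intro d; push_cast; ring
    simp only [this, ih, Nat.factorial_succ]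
    push_cast
    ring

/-- Expectation of the fourth power of the determinant of a square matrix with a row of ones on top
and independent random entries in the other `m` rows. -/
noncomputable def detE (μ3 : ℝ) {m : ℕ} (κ : Fin m → ℝ) : ℝ :=
  matE μ3 κ (fun X => (Matrix.of (Fin.cons 1 X : Fin (m + 1) → Fin (m + 1) → ℝ)).det ^ 4)

theorem detE_zero (μ3 : ℝ) (m : ℕ) :
    detE μ3 (fun _ : Fin m => 0) =
      ((m + 1 : ℕ) : ℝ) ^ 2 * (m.factorial * (m + 2).factorial / 2) := by
  rw [← prod_range_eq_factorial, ← matE_gram_sq μ3, detE]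
  congr 1
  funext X
  rw [gram, Matrix.det_mul, Matrix.det_transpose]
  ring

/-! ### Removing `κ` from the rows -/

/-- The contribution of `κ` to the fourth moment of a linear form. -/
theorem rowE_linear_pow_four (μ3 κ : ℝ) {n : ℕ} (φ : Fin n → ℝ) :
    rowE μ3 κ (fun x => (∑ l, φ l * x l) ^ 4)
      = rowE μ3 0 (fun x => (∑ l, φ l * x l) ^ 4) + κ * ∑ l, φ l ^ 4 := by
  have h : ∀ x : Fin n → ℝ, (∑ l, φ l * x l) ^ 4
      = (∑ a, ∑ b, Matrix.vecMulVec φ φ a b * (x a * x b)) ^ 2 := by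
    intro x
    rw [show (∑ l, φ l * x l) ^ 4 = ((∑ l, φ l * x l) * ∑ l, φ l * x l) ^ 2 by ring,
      Finset.sum_mul_sum]
    congr 1
    refine Finset.sum_congr rfl fun a _ => Finset.sum_congr rfl fun b _ => ?_
    rw [Matrix.vecMulVec_apply]
    ring
  simp only [h]
  rw [rowE_bilin_sq, rowE_bilin_sq]
  simp only [Matrix.vecMulVec_apply]
  have h2 : ∀ l, (φ l * φ l) ^ 2 = φ l ^ 4 := fun l => by ring
  simp only [h2]
  ring

theorem det_insertNth_row {m : ℕ} (i : Fin (m + 1)) (x : Fin (m + 1) → ℝ)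
    (X : Fin m → Fin (m + 1) → ℝ) :
    (Matrix.of (i.insertNth x X : Fin (m + 1) → Fin (m + 1) → ℝ)).det
      = ∑ l : Fin (m + 1), ((-1) ^ ((i : ℕ) + (l : ℕ)) *
          (Matrix.of fun r c => X r (l.succAbove c)).det) * x l := by
  rw [Matrix.det_succ_row _ i]
  refine Finset.sum_congr rfl fun l _ => ?_
  have : (Matrix.of (i.insertNth x X : Fin (m + 1) → Fin (m + 1) → ℝ)).submatrix i.succAbove
      l.succAbove = Matrix.of fun r c => X r (l.succAbove c) := by
    ext r c
    simp
  rw [this]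
  simp
  ring

/-- Replacing the law of row `i` by the one with `κ i = 0` costs `κ i` times the sum over the `m + 2`
columns of the expectations for the minors without that row and column, all of which agree. -/
theorem detE_rec (μ3 : ℝ) {m : ℕ} (κ : Fin (m + 1) → ℝ) (i : Fin (m + 1)) :
    detE μ3 κ = detE μ3 (Function.update κ i 0)
      + κ i * ((m + 2 : ℕ) : ℝ) * detE μ3 (fun k => κ (i.succAbove k)) := by
  have hu : (fun k => Function.update κ i 0 (i.succAbove k)) = fun k => κ (i.succAbove k) := by
    funext k
    simp [Fin.succAbove_ne]
  have hc : ∀ (x : Fin (m + 2) → ℝ) (X : Fin m → Fin (m + 2) → ℝ),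
      (Fin.cons 1 (i.insertNth x X) : Fin (m + 2) → Fin (m + 2) → ℝ)
        = i.succ.insertNth x (Fin.cons 1 X : Fin (m + 1) → Fin (m + 2) → ℝ) := by
    intro x X
    exact (Fin.insertNth_succ_cons i x 1 X).symm
  have hcol : ∀ (X : Fin m → Fin (m + 2) → ℝ) (l : Fin (m + 2)),
      (Matrix.of fun (r : Fin (m + 1)) c =>
        (Fin.cons 1 X : Fin (m + 1) → Fin (m + 2) → ℝ) r (l.succAbove c))
      = Matrix.of (Fin.cons 1 (fun r c => X r (l.succAbove c))) := by
    intro X l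
    ext r c
    refine Fin.cases ?_ (fun r => ?_) r <;> simp
  have hsign : ∀ (a : ℕ) (d : ℝ), ((-1) ^ a * d) ^ 4 = d ^ 4 := by
    intro a d
    rw [mul_pow, ← pow_mul, mul_comm a, pow_mul]
    norm_num
  rw [detE, matE_insertNth μ3 κ i, detE, matE_insertNth μ3 _ i, hu]
  simp only [hc, det_insertNth_row, Function.update_self]
  simp only [rowE_linear_pow_four μ3 (κ i)]
  rw [matE_add, matE_mul_left, matE_sum]
  simp only [hsign, hcol]
  rw [Finset.sum_congr rfl fun l _ => matE_removeCol μ3 _ l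
    (fun X => (Matrix.of (Fin.cons 1 X : Fin (m + 1) → Fin (m + 1) → ℝ)).det ^ 4)]
  simp [detE]
  ring

theorem det_insertNth_pow_four {m : ℕ} (i : Fin (m + 1)) (x : Fin (m + 1) → ℝ)
    (X : Fin m → Fin (m + 1) → ℝ) :
    (Matrix.of (i.insertNth x X : Fin (m + 1) → Fin (m + 1) → ℝ)).det ^ 4
      = (Matrix.of (Fin.cons x X : Fin (m + 1) → Fin (m + 1) → ℝ)).det ^ 4 := by
  have h : (Matrix.of (i.insertNth x X : Fin (m + 1) → Fin (m + 1) → ℝ)).det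
      = (-1) ^ (i : ℕ) * (Matrix.of (Fin.cons x X : Fin (m + 1) → Fin (m + 1) → ℝ)).det := by
    rw [← Fin.insertNth_zero', det_insertNth_row, det_insertNth_row, Finset.mul_sum]
    refine Finset.sum_congr rfl fun l _ => ?_
    rw [pow_add, Fin.val_zero, zero_add]
    ring
  rw [h, mul_pow, ← pow_mul, mul_comm (i : ℕ), pow_mul]
  norm_num

/-! ### Tables with the four marks in one column -/

/-- Expanding each of the four determinants over permutations turns `E[det ^ 4]` into the signed sum
over `4`-tables. -/
theorem sum_markedWeight_eq (m1 μ3 κ : ℝ) {m : ℕ} (i : Fin (m + 1)) :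
    ∑ π : Fin 4 → Equiv.Perm (Fin (m + 1)), markedWeight m1 μ3 (κ + 3) π (fun _ => some i)
      = m1 ^ 4 * detE μ3 (fun _ : Fin m => κ) := by
  have hdet : ∀ X : Fin m → Fin (m + 1) → ℝ,
      (Matrix.of (Fin.cons 1 X : Fin (m + 1) → Fin (m + 1) → ℝ)).det ^ 4
      = ∑ π : Fin 4 → Equiv.Perm (Fin (m + 1)),
          (∏ j : Fin 4, ((Equiv.Perm.sign (π j) : ℤ) : ℝ)) *
            ∏ k : Fin m, ∏ j : Fin 4, X k (π j (i.succAbove k)) := by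
    intro X
    rw [← det_insertNth_pow_four i, ← Matrix.det_transpose, Matrix.det_apply', Fintype.sum_pow]
    refine Finset.sum_congr rfl fun π _ => ?_
    rw [Finset.prod_mul_distrib, Finset.prod_comm]
    congr 1
    simp only [Fin.prod_univ_succAbove _ i]
    simp
  rw [detE]
  simp only [hdet]
  rw [matE_sum, Finset.mul_sum]
  refine Finset.sum_congr rfl fun π _ => ?_
  rw [matE_mul_left, matE_prod μ3 _ (fun k x => ∏ j : Fin 4, x (π j (i.succAbove k)))]
  simp only [rowE_prod_four μ3 κ (fun j => π j (i.succAbove _))]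
  rw [markedWeight, Fin.prod_univ_succAbove _ i]
  simp [colWeight, Fin.ne_succAbove]
  ring

/-- The markings in question are determined by the common column of the four marks. -/
theorem sum_filter_eq (m1 μ3 κ : ℝ) (n : ℕ) :
    (∑ p ∈ Finset.univ.filter
          (fun p : (Fin 4 → Equiv.Perm (Fin n)) × (Fin 4 → Option (Fin n)) =>
            ∃ i : Fin n, ∀ j : Fin 4, p.2 j = some i),
        markedWeight m1 μ3 (κ + 3) p.1 p.2)
      = ∑ i : Fin n, ∑ π : Fin 4 → Equiv.Perm (Fin n),
          markedWeight m1 μ3 (κ + 3) π (fun _ => some i) := by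
  rw [← Fintype.sum_prod_type']
  symm
  refine Finset.sum_bij (fun q _ => (q.2, fun _ => some q.1)) ?_ ?_ ?_ ?_
  · intro q _
    simp
  · rintro ⟨i, π⟩ _ ⟨i', π'⟩ _ h
    simp only [Prod.mk.injEq] at h
    have h0 := congrFun h.2 0
    simp_all
  · rintro ⟨π, s⟩ h
    obtain ⟨i, hi⟩ := (Finset.mem_filter.1 h).2
    exact ⟨(i, π), Finset.mem_univ _, Prod.ext rfl (funext fun j => (hi j).symm)⟩
  · intro q _
    rfl

/-! ### Solving the recursion -/

/-- The parameter `κ` in the first `b` rows and `0` in the others. -/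
noncomputable def stepVar (κ : ℝ) {m : ℕ} (b : ℕ) : Fin m → ℝ :=
  fun i => if (i : ℕ) < b then κ else 0

theorem detE_stepVar_succ (μ3 κ : ℝ) {m : ℕ} (b : ℕ) (hb : b ≤ m) :
    detE μ3 (stepVar κ (b + 1) : Fin (m + 1) → ℝ) = detE μ3 (stepVar κ b : Fin (m + 1) → ℝ)
      + κ * ((m + 2 : ℕ) : ℝ) * detE μ3 (stepVar κ b : Fin m → ℝ) := by
  rw [detE_rec μ3 _ ⟨b, Nat.lt_succ_of_le hb⟩]
  congr 1
  · congr 1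
    funext k
    by_cases hk : k = ⟨b, Nat.lt_succ_of_le hb⟩
    · simp [hk, stepVar]
    · have : (k : ℕ) ≠ b := fun h => hk (Fin.ext h)
      have h2 : (k : ℕ) < b + 1 ↔ (k : ℕ) < b := by omega
      simp [Function.update_of_ne hk, stepVar, h2]
  · congr 1
    · simp [stepVar]
    · congr 1
      funext k
      simp only [stepVar, Fin.succAbove, Fin.lt_def, Fin.val_castSucc]
      split_ifs <;> simp_all <;> omega

/-- The value of `detE` with `p` random rows when `κ = 0`. -/
noncomputable def gaussVal (p : ℕ) : ℝ :=
  ((p + 1 : ℕ) : ℝ) ^ 2 * (p.factorial * (p + 2).factorial / 2)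

theorem detE_stepVar (μ3 κ : ℝ) (b : ℕ) : ∀ m, b ≤ m →
    detE μ3 (stepVar κ b : Fin m → ℝ)
      = ∑ j ∈ range (b + 1), (b.choose j : ℝ) * κ ^ j * ((m + 1).descFactorial j : ℝ)
          * gaussVal (m - j) := by
  induction b with
  | zero =>
    intro m _
    have : (stepVar κ 0 : Fin m → ℝ) = fun _ => 0 := by
      funext i
      simp [stepVar]
    rw [this, detE_zero]
    simp [gaussVal]
  | succ b ih =>
    intro m hm
    obtain ⟨m, rfl⟩ : ∃ m', m = m' + 1 := ⟨m - 1, by omega⟩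
    have hext : ∑ j ∈ range (b + 1), (b.choose j : ℝ) * κ ^ j * ((m + 2).descFactorial j : ℝ)
          * gaussVal (m + 1 - j)
        = ∑ j ∈ range (b + 2), (b.choose j : ℝ) * κ ^ j * ((m + 2).descFactorial j : ℝ)
          * gaussVal (m + 1 - j) := by
      rw [Finset.sum_range_succ _ (b + 1)]
      simp
    -- Shift the index and apply the Pascal recurrence termwise.
    rw [detE_stepVar_succ _ _ _ (by omega), ih _ (by omega), ih _ (by omega), hext,
      Finset.sum_range_succ' _ (b + 1), Finset.sum_range_succ' _ (b + 1), add_right_comm,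
      Finset.mul_sum, ← Finset.sum_add_distrib]
    congr 1
    · refine Finset.sum_congr rfl fun j _ => ?_
      rw [Nat.choose_succ_succ, Nat.succ_descFactorial_succ, Nat.add_sub_add_right]
      push_cast
      ring
    · simp

theorem detE_const (μ3 κ : ℝ) (m : ℕ) :
    detE μ3 (fun _ : Fin m => κ)
      = ∑ j ∈ range (m + 1), (m.choose j : ℝ) * κ ^ j * ((m + 1).descFactorial j : ℝ)
          * gaussVal (m - j) := by
  rw [← detE_stepVar μ3 κ m m le_rfl]
  congr 1
  funext i
  simp [stepVar]

/-! ### The generating function -/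

theorem coeff_eq (κ : ℝ) (m j : ℕ) (hj : j ≤ m) :
    (m + 1 : ℝ) * ((m.choose j : ℝ) * κ ^ j * ((m + 1).descFactorial j : ℝ) * gaussVal (m - j))
      / ((m + 1).factorial : ℝ) ^ 2
      = κ ^ j / j.factorial * (((m + 1 - j : ℕ) : ℝ) ^ 2 * ((m + 1 - j : ℕ) + 1) / 2) := by
  obtain ⟨p, rfl⟩ := Nat.exists_eq_add_of_le hj
  have e1 : j + p - j = p := by omega
  have e2 : j + p + 1 - j = p + 1 := by omega
  have h1 : ((j + p).choose j : ℝ) = (j + p).factorial / (j.factorial * p.factorial) := by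
    rw [Nat.cast_choose ℝ hj, e1]
  have h2 : ((j + p + 1).descFactorial j : ℝ) = (j + p + 1).factorial / (p + 1).factorial := by
    rw [eq_div_iff (by positivity), mul_comm, ← e2]
    exact_mod_cast Nat.factorial_mul_descFactorial (by omega)
  rw [h1, h2, gaussVal, e1, e2]
  simp only [Nat.factorial_succ]
  push_cast
  have := Nat.factorial_ne_zero j
  have := Nat.factorial_ne_zero p
  have := Nat.factorial_ne_zero (j + p)
  have h3 : (j : ℝ) + p + 1 ≠ 0 := by positivity
  have h4 : (p : ℝ) + 1 ≠ 0 := by positivity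
  field_simp

theorem hasSum_quadratic (t : ℝ) (ht : |t| < 1) :
    HasSum (fun p : ℕ => ((p : ℝ) ^ 2 * (p + 1) / 2) * t ^ p) (t * (1 + 2 * t) / (1 - t) ^ 4) := by
  have ht' : ‖t‖ < 1 := by simpa using ht
  -- Partial fractions: `t (1 + 2 t) = 3 - 5 (1 - t) + 2 (1 - t) ^ 2`.
  have h1 := (hasSum_choose_mul_geometric_of_norm_lt_one 3 ht').mul_left 3
  have h2 := (hasSum_choose_mul_geometric_of_norm_lt_one 2 ht').mul_left 5
  have h3 := (hasSum_choose_mul_geometric_of_norm_lt_one 1 ht').mul_left 2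
  have ht1 : 1 - t ≠ 0 := by
    have := (abs_lt.1 ht).2
    linarith
  have hval : t * (1 + 2 * t) / (1 - t) ^ 4
      = 3 * (1 / (1 - t) ^ (3 + 1)) - 5 * (1 / (1 - t) ^ (2 + 1)) + 2 * (1 / (1 - t) ^ (1 + 1)) := by
    field_simp
    ring
  rw [hval]
  have hterm : ∀ p : ℕ, (p : ℝ) ^ 2 * (p + 1) / 2 * t ^ p
      = 3 * (((p + 3).choose 3 : ℝ) * t ^ p) - 5 * (((p + 2).choose 2 : ℝ) * t ^ p)
        + 2 * (((p + 1).choose 1 : ℝ) * t ^ p) := by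
    intro p
    have c3 : ((p + 3).choose 3 : ℝ) = ((p : ℝ) + 3) * (p + 2) * (p + 1) / 6 := by
      rw [Nat.cast_choose_eq_ascPochhammer_div]
      simp [ascPochhammer_succ_eval, Nat.factorial]
      ring
    have c2 : ((p + 2).choose 2 : ℝ) = ((p : ℝ) + 2) * (p + 1) / 2 := by
      rw [Nat.cast_choose_eq_ascPochhammer_div]
      simp [ascPochhammer_succ_eval, Nat.factorial]
      ring
    rw [c3, c2, Nat.choose_one_right]
    push_cast
    ring
  simp only [hterm]
  exact (h1.sub h2).add h3

/-- The terms of the series are those of a Cauchy product. The column of the marks accounts for the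
factor `m + 1` of `coeff_eq`, and the term `j = n` on the right vanishes. -/
theorem term_eq (m1 μ3 κ t : ℝ) (n : ℕ) :
    (∑ p ∈ Finset.univ.filter
          (fun p : (Fin 4 → Equiv.Perm (Fin n)) × (Fin 4 → Option (Fin n)) =>
            ∃ i : Fin n, ∀ j : Fin 4, p.2 j = some i),
        markedWeight m1 μ3 (κ + 3) p.1 p.2)
        * t ^ n / (Nat.factorial n : ℝ) ^ 2
      = m1 ^ 4 * ∑ j ∈ range (n + 1), (t * κ) ^ j / j.factorial *
          ((((n - j : ℕ) : ℝ) ^ 2 * ((n - j : ℕ) + 1) / 2) * t ^ (n - j)) := by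
  rw [sum_filter_eq]
  cases n with
  | zero => simp
  | succ m =>
    simp only [sum_markedWeight_eq, detE_const]
    rw [Finset.sum_const, Finset.card_univ, Fintype.card_fin, nsmul_eq_mul,
      Finset.sum_range_succ _ (m + 1), Nat.sub_self]
    simp only [Nat.cast_zero, ne_eq, OfNat.ofNat_ne_zero, not_false_eq_true, zero_pow, zero_mul,
      zero_div, mul_zero, add_zero]
    have : ∀ j ∈ range (m + 1), (t * κ) ^ j / (j.factorial : ℝ) *
          ((((m + 1 - j : ℕ) : ℝ) ^ 2 * ((m + 1 - j : ℕ) + 1) / 2) * t ^ (m + 1 - j))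
        = (m + 1 : ℝ) * ((m.choose j : ℝ) * κ ^ j * ((m + 1).descFactorial j : ℝ)
            * gaussVal (m - j)) / ((m + 1).factorial : ℝ) ^ 2 * t ^ (m + 1) := by
      intro j hj
      have hj' : j ≤ m := by simpa [Nat.lt_succ_iff] using hj
      rw [coeff_eq κ m j hj', ← pow_mul_pow_sub t (show j ≤ m + 1 by omega), mul_pow]
      ring
    rw [Finset.sum_congr rfl this, ← Finset.sum_mul, ← Finset.sum_div, ← Finset.mul_sum]
    push_cast
    ring

end S41

theorem S41_generating_function (m1 μ3 μ4 : ℝ) (t : ℝ) (ht : |t| < 1) :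
    HasSum (fun n : ℕ =>
      (∑ p ∈ Finset.univ.filter
          (fun p : (Fin 4 → Equiv.Perm (Fin n)) × (Fin 4 → Option (Fin n)) =>
            ∃ i : Fin n, ∀ j : Fin 4, p.2 j = some i),
        markedWeight m1 μ3 μ4 p.1 p.2)
        * t ^ n / (Nat.factorial n : ℝ) ^ 2)
      (m1 ^ 4 * t * (1 + 2 * t) * Real.exp (t * (μ4 - 3)) / (1 - t) ^ 4) := by
  obtain ⟨κ, rfl⟩ : ∃ κ, μ4 = κ + 3 := ⟨μ4 - 3, by ring⟩
  simp only [S41.term_eq, add_sub_cancel_right]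
  have h1 : HasSum (fun j : ℕ => (t * κ) ^ j / (j.factorial : ℝ)) (Real.exp (t * κ)) := by
    rw [Real.exp_eq_exp_ℝ]
    exact NormedSpace.expSeries_div_hasSum_exp (t * κ)
  have h2 := S41.hasSum_quadratic t ht
  have h := (hasSum_sum_range_mul_of_summable_norm h1.summable.norm h2.summable.norm).mul_left
    (m1 ^ 4)
  rw [h1.tsum_eq, h2.tsum_eq] at h
  have hval : m1 ^ 4 * t * (1 + 2 * t) * Real.exp (t * κ) / (1 - t) ^ 4
      = m1 ^ 4 * (Real.exp (t * κ) * (t * (1 + 2 * t) / (1 - t) ^ 4)) := by ring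
  rw [hval]
  exact h
end

section
/- Let m₁, μ₃, μ₄ ∈ ℝ and for n ∈ ℕ define s⁴²(n) = ∑ over all pairs (π, s) with π : Fin 4 → Equiv.Perm (Fin n) and s : Fin 4 → Option (Fin n) such that s j ≠ none for all j ∈ Fin 4 and the set { i ∈ Fin n | ∃ j, s j = some i } has exactly two elements (i.e., all four rows are marked and the marks occupy exactly two distinct columns), of ( ∏_{j} sgn(π j) ) · ∏_{i ∈ Fin n} ( m₁^{a(i)} · ∏_{l ∈ Fin n} c_{b(i,l)} ), where a(i) = #{ j | s j = some i }, b(i,l) = #{ j | s j ≠ some i ∧ (π j) i = l }, and c₀ = 1, c₁ = 0, c₂ = 1, c₃ = μ₃, c₄ = μ₄. Then for every t ∈ ℝ with |t| < 1, the series ∑_{n=0}^∞ s⁴²(n)·tⁿ/(n!)² converges (HasSum) with sum 6·m₁⁴·t²·(1 + t)·exp(t·(μ₄ − 3)) / (1 − t)⁵. -/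
open Finset Matrix Polynomial

/-! ### Bordered and Gram determinants -/

/-- The product of the bordered matrix with `[1, -adj(W) u; 0, det W]` is block lower triangular,
which gives the bordered determinant up to the factor `det W`. -/
theorem det_bordered_mul_det {R : Type*} [CommRing R] {k : ℕ} (W : Matrix (Fin k) (Fin k) R)
    (u v : Fin k → R) (d : R) :
    (fromBlocks W (replicateCol Unit u) (replicateRow Unit v) (of fun _ _ => d)).det * W.det =
      W.det * (d * W.det - v ⬝ᵥ W.adjugate *ᵥ u) := by
  have h : fromBlocks W (replicateCol Unit u) (replicateRow Unit v) (of fun _ _ => d) *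
      fromBlocks 1 (replicateCol Unit (-(W.adjugate *ᵥ u))) 0 (of fun _ _ => W.det) =
      fromBlocks W 0 (replicateRow Unit v)
        (of fun _ _ => d * W.det - v ⬝ᵥ W.adjugate *ᵥ u) := by
    rw [fromBlocks_multiply]
    congr 1
    · simp
    · ext i j
      have : (W * replicateCol Unit (-(W.adjugate *ᵥ u))) i j = -(W.det * u i) := by
        have h2 : W *ᵥ (W.adjugate *ᵥ u) = W.det • u := by
          rw [mulVec_mulVec, mul_adjugate, smul_mulVec, one_mulVec]
        have h3 := congrFun h2 i
        simp only [mulVec, dotProduct, Pi.smul_apply, smul_eq_mul] at h3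
        simp [Matrix.mul_apply, mulVec, dotProduct, h3]
      rw [Matrix.add_apply, this]
      simp [Matrix.mul_apply, mul_comm]
    · simp
    · ext i j
      simp [Matrix.mul_apply, dotProduct, sub_eq_neg_add]
  have h' := congrArg Matrix.det h
  rw [det_mul, det_fromBlocks_zero₂₁, det_fromBlocks_zero₁₂] at h'
  simpa using h'

/-- Expansion of a bordered determinant through the adjugate, without invertibility of `W`. -/
theorem det_bordered {k : ℕ} (W : Matrix (Fin k) (Fin k) ℝ)
    (u v : Fin k → ℝ) (d : ℝ) :
    (fromBlocks W (replicateCol Unit u) (replicateRow Unit v) (of fun _ _ => d)).det =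
      d * W.det - v ⬝ᵥ W.adjugate *ᵥ u := by
  -- replace `W` by `W + X • 1`, whose determinant is monic in `X`, cancel, and set `X = 0`
  let W' : Matrix (Fin k) (Fin k) ℝ[X] := charmatrix (-W)
  have hW' : W'.det ≠ 0 := (charpoly_monic (-W)).ne_zero
  have hmap : W'.map (evalRingHom 0) = W := by
    ext i j
    by_cases hij : i = j
    · subst hij; simp [W']
    · simp [W', hij]
  have h := det_bordered_mul_det W' (fun i => C (u i)) (fun i => C (v i)) (C d)
  rw [mul_comm] at h
  have h2 := congrArg (evalRingHom (0 : ℝ)) (mul_left_cancel₀ hW' h)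
  rw [RingHom.map_det, map_sub, map_mul, RingHom.map_det, RingHom.map_dotProduct] at h2
  have h3 : (evalRingHom (0:ℝ)) ∘ (W'.adjugate *ᵥ fun i => C (u i)) = W.adjugate *ᵥ u := by
    ext i
    rw [Function.comp_apply, RingHom.map_mulVec]
    have : W'.adjugate.map (evalRingHom 0) = W.adjugate := by
      rw [← hmap]; exact RingHom.map_adjugate (evalRingHom 0) W'
    rw [this, show (⇑(evalRingHom (0 : ℝ)) ∘ fun i => C (u i)) = u from by ext; simp]
  rw [h3] at h2
  have h4 : (evalRingHom (0:ℝ)) ∘ (fun i => C (v i)) = v := by ext; simp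
  rw [h4, RingHom.mapMatrix_apply, RingHom.mapMatrix_apply, hmap] at h2
  simp only [coe_evalRingHom, eval_C] at h2
  rw [← h2, fromBlocks_map]
  congr 1
  congr 1
  · rw [← hmap]; rfl
  · ext; simp
  · ext; simp
  · ext; simp

/-- The determinant of the matrix of dot products of the `k` vectors `V i ∈ ℝᵐ`. -/
noncomputable def gramDet {k m : ℕ} (V : Fin k → Fin m → ℝ) : ℝ :=
  (of fun i j => V i ⬝ᵥ V j : Matrix (Fin k) (Fin k) ℝ).det

theorem gramDet_eq {k m : ℕ} (V : Fin k → Fin m → ℝ) : gramDet V = (of V * (of V)ᵀ).det := rfl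

theorem gramDet_comp_perm {k m : ℕ} (V : Fin k → Fin m → ℝ) (e : Equiv.Perm (Fin k)) :
    gramDet (fun i => V (e i)) = gramDet V :=
  det_submatrix_equiv_self e (of fun i j => V i ⬝ᵥ V j : Matrix (Fin k) (Fin k) ℝ)

theorem gramDet_swap {k m : ℕ} (x y : Fin m → ℝ) (V : Fin k → Fin m → ℝ) :
    gramDet (Fin.cons x (Fin.cons y V)) = gramDet (Fin.cons y (Fin.cons x V)) := by
  rw [← gramDet_comp_perm _ (Equiv.swap 0 1)]
  congr 1
  funext i
  refine Fin.cases ?_ (fun i => Fin.cases ?_ (fun i => ?_) i) i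
  · simp
  · simp
  · rw [Equiv.swap_apply_of_ne_of_ne] <;> simp [Fin.ext_iff]

theorem gramDet_square {m : ℕ} (V : Fin m → Fin m → ℝ) : gramDet V = (of V).det ^ 2 := by
  rw [gramDet_eq, det_mul, det_transpose, sq]

/-- The symmetric matrix `M` with `gramDet (x, V) = xᵀ M x`. When the `V i` are independent, it is
`gramDet V` times the orthogonal projection onto their orthogonal complement; the adjugate makes
the definition meaningful for dependent vectors as well. -/
noncomputable def gramForm {k m : ℕ} (V : Fin k → Fin m → ℝ) : Matrix (Fin m) (Fin m) ℝ :=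
  gramDet V • 1 - (of V)ᵀ * (of V * (of V)ᵀ).adjugate * of V

/-- `Fin (k + 1)` with its element `0` split off as the right summand. -/
def succEquiv (k : ℕ) : Fin k ⊕ Unit ≃ Fin (k + 1) where
  toFun := Sum.elim Fin.succ (fun _ => 0)
  invFun := Fin.cases (Sum.inr ()) Sum.inl
  left_inv x := by rcases x with x | x <;> simp
  right_inv x := by refine Fin.cases ?_ (fun i => ?_) x <;> simp

theorem gramDet_cons {k m : ℕ} (x : Fin m → ℝ) (V : Fin k → Fin m → ℝ) :
    gramDet (Fin.cons x V : Fin (k + 1) → Fin m → ℝ) = x ⬝ᵥ gramForm V *ᵥ x := by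
  have h : (of fun i j => (Fin.cons x V : Fin (k + 1) → Fin m → ℝ) i ⬝ᵥ
      (Fin.cons x V : Fin (k + 1) → Fin m → ℝ) j).submatrix (succEquiv k) (succEquiv k) =
      fromBlocks (of V * (of V)ᵀ) (replicateCol Unit (of V *ᵥ x)) (replicateRow Unit (of V *ᵥ x))
        (of fun _ _ => x ⬝ᵥ x) := by
    ext i j
    rcases i with i | i <;> rcases j with j | j
    · simp [succEquiv]; rfl
    · simp [succEquiv]; rfl
    · simp [succEquiv]; exact dotProduct_comm _ _
    · simp [succEquiv]
  rw [gramDet, ← det_submatrix_equiv_self (succEquiv k), h, det_bordered, gramForm, sub_mulVec,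
    dotProduct_sub, smul_mulVec, one_mulVec, dotProduct_smul, ← gramDet_eq, smul_eq_mul, mul_comm]
  congr 1
  rw [← mulVec_mulVec, ← mulVec_mulVec, dotProduct_mulVec x, vecMul_transpose]

theorem gramForm_transpose {k m : ℕ} (V : Fin k → Fin m → ℝ) : (gramForm V)ᵀ = gramForm V := by
  simp [gramForm, Matrix.transpose_mul, adjugate_transpose, Matrix.mul_assoc]

theorem gramForm_mul_self {k m : ℕ} (V : Fin k → Fin m → ℝ) :
    gramForm V * gramForm V = gramDet V • gramForm V := by
  have h : (of V)ᵀ * (of V * (of V)ᵀ).adjugate * of V * ((of V)ᵀ * (of V * (of V)ᵀ).adjugate * of V)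
      = gramDet V • ((of V)ᵀ * (of V * (of V)ᵀ).adjugate * of V) := by
    have : (of V)ᵀ * (of V * (of V)ᵀ).adjugate * of V *
        ((of V)ᵀ * (of V * (of V)ᵀ).adjugate * of V) =
        (of V)ᵀ * ((of V * (of V)ᵀ).adjugate * (of V * (of V)ᵀ)) *
          ((of V * (of V)ᵀ).adjugate * of V) := by
      simp only [Matrix.mul_assoc]
    rw [this, adjugate_mul, ← gramDet_eq]
    simp [Matrix.mul_assoc]
  simp only [gramForm, Matrix.sub_mul, Matrix.mul_sub, smul_mul_assoc, mul_smul_comm, Matrix.one_mul,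
    Matrix.mul_one, h, sub_self, sub_zero, smul_sub]

theorem gramForm_trace {k m : ℕ} (V : Fin k → Fin m → ℝ) :
    (gramForm V).trace = (m - k) * gramDet V := by
  rw [gramForm, trace_sub, Matrix.mul_assoc, trace_mul_comm, Matrix.mul_assoc, adjugate_mul,
    ← gramDet_eq]
  simp [trace_smul, trace_one]
  ring

/-- The diagonal entry at `l` is the Gram determinant of the vectors with coordinate `l` deleted:
both are the determinant of the Gram matrix bordered by the `l`-th coordinates and `1`. -/
theorem gramForm_diag {k m : ℕ} (V : Fin k → Fin (m + 1) → ℝ) (l : Fin (m + 1)) :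
    gramForm V l l = gramDet (fun i a => V i (l.succAbove a)) := by
  have h : fromBlocks (of V * (of V)ᵀ) (replicateCol Unit fun i => V i l)
      (replicateRow Unit fun i => V i l) (1 : Matrix Unit Unit ℝ) =
      fromBlocks (of V * (of V)ᵀ) (replicateCol Unit fun i => V i l)
      (replicateRow Unit fun i => V i l) (of fun _ _ => 1) := by
    congr 1
  have h1 := det_bordered (of V * (of V)ᵀ) (fun i => V i l) (fun i => V i l) 1
  rw [← h, det_fromBlocks_one₂₂] at h1
  have h2 : of V * (of V)ᵀ - replicateCol Unit (fun i => V i l) * replicateRow Unit (fun i => V i l)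
      = of fun i j => (fun a => V i (l.succAbove a)) ⬝ᵥ (fun a => V j (l.succAbove a)) := by
    ext i j
    simp [Matrix.mul_apply, dotProduct, Fin.sum_univ_succAbove _ l]
  rw [h2] at h1
  rw [gramDet, h1, gramForm, ← gramDet_eq]
  simp [Matrix.mul_apply, dotProduct, mulVec, Finset.sum_mul, Finset.mul_sum, mul_assoc]
  exact Finset.sum_comm

/-! ### Expectations over matrices with independent entries -/

/-- Expectation of `f` at a vector of `m` independent entries, each taking the value `v ω` with
(possibly negative) weight `w ω`. -/
noncomputable def expVec {Ω : Type} [Fintype Ω] (w v : Ω → ℝ) (m : ℕ) (f : (Fin m → ℝ) → ℝ) : ℝ :=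
  ∑ x : Fin m → Ω, (∏ l, w (x l)) * f (fun l => v (x l))

/-- Expectation of `f` at a `k × m` matrix with independent entries distributed as in `expVec`. -/
noncomputable def expMat {Ω : Type} [Fintype Ω] (w v : Ω → ℝ) (k m : ℕ)
    (f : (Fin k → Fin m → ℝ) → ℝ) : ℝ :=
  ∑ X : Fin k → Fin m → Ω, (∏ i, ∏ l, w (X i l)) * f (fun i l => v (X i l))

section Expectation

variable {Ω : Type} [Fintype Ω] (w v : Ω → ℝ)

theorem expVec_sum {ι : Type*} (s : Finset ι) (m : ℕ) (f : ι → (Fin m → ℝ) → ℝ) :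
    expVec w v m (fun x => ∑ i ∈ s, f i x) = ∑ i ∈ s, expVec w v m (f i) := by
  simp only [expVec, Finset.mul_sum]
  exact Finset.sum_comm

theorem expVec_const_mul (m : ℕ) (c : ℝ) (f : (Fin m → ℝ) → ℝ) :
    expVec w v m (fun x => c * f x) = c * expVec w v m f := by
  simp only [expVec, Finset.mul_sum]
  exact Finset.sum_congr rfl fun _ _ => by ring

theorem expVec_prod (m : ℕ) (h : Fin m → ℝ → ℝ) :
    expVec w v m (fun x => ∏ l, h l (x l)) = ∏ l, ∑ ω, w ω * h l (v ω) := by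
  rw [Finset.prod_univ_sum, Fintype.piFinset_univ]
  simp only [expVec, Finset.prod_mul_distrib]

theorem expMat_sum {ι : Type*} (s : Finset ι) (k m : ℕ) (f : ι → (Fin k → Fin m → ℝ) → ℝ) :
    expMat w v k m (fun x => ∑ i ∈ s, f i x) = ∑ i ∈ s, expMat w v k m (f i) := by
  simp only [expMat, Finset.mul_sum]
  exact Finset.sum_comm

theorem expMat_add (k m : ℕ) (f g : (Fin k → Fin m → ℝ) → ℝ) :
    expMat w v k m (fun x => f x + g x) = expMat w v k m f + expMat w v k m g := by
  simp only [expMat, mul_add, Finset.sum_add_distrib]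

theorem expMat_const_mul (k m : ℕ) (c : ℝ) (f : (Fin k → Fin m → ℝ) → ℝ) :
    expMat w v k m (fun x => c * f x) = c * expMat w v k m f := by
  simp only [expMat, Finset.mul_sum]
  exact Finset.sum_congr rfl fun _ _ => by ring

theorem expMat_zero (m : ℕ) (f : (Fin 0 → Fin m → ℝ) → ℝ) :
    expMat w v 0 m f = f Fin.elim0 := by
  simp only [expMat, Finset.univ_unique, Finset.sum_singleton, Finset.univ_eq_empty,
    Finset.prod_empty, one_mul]
  congr 1
  exact Subsingleton.elim _ _

/-- The first row of the matrix can be averaged separately. -/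
theorem expMat_succ (k m : ℕ) (f : (Fin (k + 1) → Fin m → ℝ) → ℝ) :
    expMat w v (k + 1) m f =
      expMat w v k m fun V => expVec w v m fun x => f (Fin.cons x V) := by
  rw [expMat, ← (Fin.consEquiv fun _ => Fin m → Ω).sum_comp, Fintype.sum_prod_type,
    Finset.sum_comm]
  simp only [expMat, expVec, Finset.mul_sum]
  refine Finset.sum_congr rfl fun V _ => Finset.sum_congr rfl fun x _ => ?_
  have : (fun i l => v ((Fin.consEquiv fun _ => Fin m → Ω) (x, V) i l)) =
      (Fin.cons (fun l => v (x l)) (fun i l => v (V i l)) : Fin (k + 1) → Fin m → ℝ) := by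
    funext i
    refine Fin.cases ?_ (fun i => ?_) i <;> simp [Fin.consEquiv]
  rw [this, Fin.prod_univ_succ]
  simp only [Fin.consEquiv, Equiv.coe_fn_mk, Fin.cons_zero, Fin.cons_succ]
  ring

theorem expMat_comp_perm (k m : ℕ) (e : Equiv.Perm (Fin k)) (f : (Fin k → Fin m → ℝ) → ℝ) :
    expMat w v k m (fun X => f fun i => X (e i)) = expMat w v k m f := by
  rw [expMat, expMat, ← (Equiv.arrowCongr e.symm (Equiv.refl (Fin m → Ω))).sum_comp
    (fun X => (∏ i, ∏ l, w (X i l)) * f (fun i l => v (X i l)))]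
  refine Finset.sum_congr rfl fun X _ => ?_
  simp only [Equiv.arrowCongr, Equiv.coe_fn_mk, Function.comp_apply, Equiv.refl_apply, Equiv.symm_symm]
  rw [Equiv.prod_comp e (fun i => ∏ l, w (X i l))]

variable {w v}

theorem expVec_succAbove (h0 : ∑ ω, w ω = 1) (m : ℕ) (l : Fin (m + 1)) (f : (Fin m → ℝ) → ℝ) :
    expVec w v (m + 1) (fun x => f fun a => x (l.succAbove a)) = expVec w v m f := by
  rw [expVec, ← (Fin.insertNthEquiv (fun _ => Ω) l).sum_comp, Fintype.sum_prod_type]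
  simp only [Fin.insertNthEquiv_apply, Fin.prod_univ_succAbove _ l, Fin.insertNth_apply_same,
    Fin.insertNth_apply_succAbove, mul_assoc]
  simp only [← Finset.mul_sum]
  rw [← Finset.sum_mul, h0, one_mul, expVec]

theorem expMat_succAbove (h0 : ∑ ω, w ω = 1) (k m : ℕ) (l : Fin (m + 1))
    (f : (Fin k → Fin m → ℝ) → ℝ) :
    expMat w v k (m + 1) (fun X => f fun i a => X i (l.succAbove a)) = expMat w v k m f := by
  induction k with
  | zero => rw [expMat_zero, expMat_zero]; congr 1; exact Subsingleton.elim _ _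
  | succ k ih =>
    rw [expMat_succ, expMat_succ, ← ih]
    congr 1
    funext V
    rw [← expVec_succAbove h0 m l]
    congr 1
    funext x
    congr 1
    funext i
    refine Fin.cases ?_ (fun i => ?_) i <;> simp

/-- The signed distribution giving weight `w ω` to `v ω` has total mass `1`, and its first four
moments are `0`, `1`, `μ3`, `μ4`. -/
structure HasMoments (w v : Ω → ℝ) (μ3 μ4 : ℝ) : Prop where
  moment : ∀ r ≤ 4, ∑ ω, w ω * v ω ^ r = colWeight μ3 μ4 r

variable {μ3 μ4 : ℝ}

theorem HasMoments.total (h : HasMoments w v μ3 μ4) : ∑ ω, w ω = 1 := by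
  simpa [colWeight] using h.moment 0 (by norm_num)

/-- Moments of monomials of degree at most four are products of column weights. -/
theorem HasMoments.expVec_monomial (h : HasMoments w v μ3 μ4) {J : Type*} [Fintype J]
    (hJ : Fintype.card J ≤ 4) {m : ℕ} (a : J → Fin m) :
    expVec w v m (fun x => ∏ j, x (a j)) =
      ∏ l, colWeight μ3 μ4 (univ.filter fun j => a j = l).card := by
  have : ∀ x : Fin m → ℝ, ∏ j, x (a j) = ∏ l, x l ^ (univ.filter fun j => a j = l).card := by
    intro x
    rw [← Finset.prod_fiberwise (s := univ) (g := a)]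
    refine Finset.prod_congr rfl fun l _ => ?_
    rw [← Finset.prod_const]
    exact Finset.prod_congr rfl fun j hj => by rw [(Finset.mem_filter.1 hj).2]
  simp only [this]
  rw [expVec_prod w v m (fun l y => y ^ (univ.filter fun j => a j = l).card)]
  exact Finset.prod_congr rfl fun l _ => h.moment _ ((Finset.card_le_univ _).trans hJ)

theorem HasMoments.expVec_one (h : HasMoments w v μ3 μ4) {m : ℕ} (a : Fin m) :
    expVec w v m (fun x => x a) = 0 := by
  have := h.expVec_monomial (J := Fin 1) (by simp) (fun _ => a)
  simp only [Finset.univ_unique, Finset.prod_singleton] at this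
  rw [this]
  refine Finset.prod_eq_zero (Finset.mem_univ a) ?_
  simp [colWeight]

theorem colWeight_prod_two {m : ℕ} (a b : Fin m) :
    ∏ l, colWeight μ3 μ4 (univ.filter fun j => ![a, b] j = l).card = if a = b then 1 else 0 := by
  by_cases hab : a = b
  · subst hab
    rw [if_pos rfl]
    refine Finset.prod_eq_one fun l _ => ?_
    by_cases hl : a = l <;>
    simp [-Finset.sum_boole, Finset.card_filter, Fin.sum_univ_succ, hl, colWeight]
  · rw [if_neg hab]
    refine Finset.prod_eq_zero (Finset.mem_univ a) ?_
    simp [-Finset.sum_boole, Finset.card_filter, Fin.sum_univ_succ, Ne.symm hab, colWeight]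

/-- The fourth-moment tensor is the Gaussian one, a sum over the three pairings, plus
`μ4 - 3` times the full diagonal; `μ3` drops out because a triple coincidence leaves a single
factor, whose mean is `0`. -/
theorem colWeight_prod_four {m : ℕ} (a b c d : Fin m) :
    ∏ l, colWeight μ3 μ4 (univ.filter fun j => ![a, b, c, d] j = l).card =
      (if a = b then 1 else 0) * (if c = d then 1 else 0) +
      (if a = c then 1 else 0) * (if b = d then 1 else 0) +
      (if a = d then 1 else 0) * (if b = c then 1 else 0) +
      (μ4 - 3) * if a = b ∧ a = c ∧ a = d then 1 else 0 := by
  have hsub : ∏ l, colWeight μ3 μ4 (univ.filter fun j => ![a, b, c, d] j = l).card =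
      ∏ l ∈ {a, b, c, d}, colWeight μ3 μ4 (univ.filter fun j => ![a, b, c, d] j = l).card := by
    symm
    refine Finset.prod_subset (Finset.subset_univ _) fun l _ hl => ?_
    simp only [Finset.mem_insert, Finset.mem_singleton, not_or] at hl
    simp [-Finset.sum_boole, Finset.card_filter, Fin.sum_univ_succ, Ne.symm hl.1, Ne.symm hl.2.1, Ne.symm hl.2.2.1,
      Ne.symm hl.2.2.2, colWeight]
  rw [hsub]
  -- run through all equality patterns; the inconsistent ones contradict transitivity
  simp only [Finset.card_filter, Fin.sum_univ_succ]
  by_cases h1 : a = b <;> by_cases h2 : a = c <;> by_cases h3 : a = d <;>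
  by_cases h4 : b = c <;> by_cases h5 : b = d <;> by_cases h6 : c = d <;>
  first
  | (exfalso; simp_all only [not_true_eq_false]; done)
  | (subst_vars
     simp [-Finset.sum_boole, Finset.prod_insert, colWeight, Ne.symm, *] <;> ring)

theorem HasMoments.expVec_two (h : HasMoments w v μ3 μ4) {m : ℕ} (a b : Fin m) :
    expVec w v m (fun x => x a * x b) = if a = b then 1 else 0 := by
  rw [← colWeight_prod_two (μ3 := μ3) (μ4 := μ4), ← h.expVec_monomial (J := Fin 2) (by simp)]
  simp [Fin.prod_univ_succ]

theorem HasMoments.expVec_four (h : HasMoments w v μ3 μ4) {m : ℕ} (a b c d : Fin m) :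
    expVec w v m (fun x => x a * x b * (x c * x d)) =
      (if a = b then 1 else 0) * (if c = d then 1 else 0) +
      (if a = c then 1 else 0) * (if b = d then 1 else 0) +
      (if a = d then 1 else 0) * (if b = c then 1 else 0) +
      (μ4 - 3) * if a = b ∧ a = c ∧ a = d then 1 else 0 := by
  rw [← colWeight_prod_four (μ3 := μ3) (μ4 := μ4), ← h.expVec_monomial (J := Fin 4) (by simp)]
  simp [Fin.prod_univ_succ, mul_assoc]

theorem HasMoments.expVec_quadratic (h : HasMoments w v μ3 μ4) {m : ℕ}
    (M : Matrix (Fin m) (Fin m) ℝ) :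
    expVec w v m (fun x => x ⬝ᵥ M *ᵥ x) = M.trace := by
  have : ∀ x : Fin m → ℝ, x ⬝ᵥ M *ᵥ x = ∑ a, ∑ b, M a b * (x a * x b) := by
    intro x
    simp only [dotProduct, mulVec, Finset.mul_sum]
    exact Finset.sum_congr rfl fun _ _ => Finset.sum_congr rfl fun _ _ => by ring
  simp only [this, expVec_sum, expVec_const_mul, h.expVec_two]
  simp [Matrix.trace]

theorem HasMoments.expVec_quadratic_sq (h : HasMoments w v μ3 μ4) {m : ℕ}
    (M : Matrix (Fin m) (Fin m) ℝ) (hM : Mᵀ = M) :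
    expVec w v m (fun x => (x ⬝ᵥ M *ᵥ x) ^ 2) =
      M.trace ^ 2 + 2 * (M * M).trace + (μ4 - 3) * ∑ l, M l l ^ 2 := by
  have key : ∀ x : Fin m → ℝ, (x ⬝ᵥ M *ᵥ x) ^ 2 =
      ∑ a, ∑ b, ∑ c, ∑ d, (M a b * M c d) * (x a * x b * (x c * x d)) := by
    intro x
    have : x ⬝ᵥ M *ᵥ x = ∑ a, ∑ b, M a b * (x a * x b) := by
      simp only [dotProduct, mulVec, Finset.mul_sum]
      exact Finset.sum_congr rfl fun _ _ => Finset.sum_congr rfl fun _ _ => by ring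
    rw [this, sq]
    simp only [Finset.sum_mul, Finset.mul_sum]
    refine Finset.sum_congr rfl fun _ _ => Finset.sum_congr rfl fun _ _ =>
      Finset.sum_congr rfl fun _ _ => Finset.sum_congr rfl fun _ _ => by ring
  have hsymm : ∀ a b, M b a = M a b := fun a b => congrFun (congrFun hM a) b
  simp only [key, expVec_sum, expVec_const_mul, h.expVec_four]
  simp only [mul_add, Finset.sum_add_distrib]
  have e1 : ∑ a, ∑ b, ∑ c, ∑ d, M a b * M c d *
      ((if a = b then 1 else 0) * (if c = d then (1:ℝ) else 0)) = M.trace ^ 2 := by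
    simp [Matrix.trace, sq, Finset.sum_mul, Finset.mul_sum]
    exact Finset.sum_comm
  have e2 : ∑ a, ∑ b, ∑ c, ∑ d, M a b * M c d *
      ((if a = c then 1 else 0) * (if b = d then (1:ℝ) else 0)) = (M * M).trace := by
    simp [Matrix.trace, Matrix.mul_apply, hsymm]
  have e3 : ∑ a, ∑ b, ∑ c, ∑ d, M a b * M c d *
      ((if a = d then 1 else 0) * (if b = c then (1:ℝ) else 0)) = (M * M).trace := by
    simp [Matrix.trace, Matrix.mul_apply]
  have e4 : ∑ a, ∑ b, ∑ c, ∑ d, M a b * M c d *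
      ((μ4 - 3) * if a = b ∧ a = c ∧ a = d then (1:ℝ) else 0) = (μ4 - 3) * ∑ l, M l l ^ 2 := by
    simp only [ite_and, mul_ite, mul_one, mul_zero, Finset.sum_ite_eq, Finset.sum_ite_irrel,
      Finset.sum_const_zero, Finset.mem_univ, if_true, Finset.mul_sum]
    exact Finset.sum_congr rfl fun _ _ => by ring
  rw [e1, e2, e3, e4]
  ring

theorem HasMoments.expVec_gramDet (h : HasMoments w v μ3 μ4) {k m : ℕ} (V : Fin k → Fin m → ℝ) :
    expVec w v m (fun x => gramDet (Fin.cons x V : Fin (k + 1) → Fin m → ℝ)) =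
      (m - k) * gramDet V := by
  simp only [gramDet_cons]
  rw [h.expVec_quadratic, gramForm_trace]

/-- Since `M = gramForm V` satisfies `M * M = gramDet V • M` and `tr M = (m + 1 - k) gramDet V`,
the Gaussian part `(tr M)² + 2 tr M²` is a multiple of `(gramDet V)²`. -/
theorem HasMoments.expVec_gramDet_sq (h : HasMoments w v μ3 μ4) {k m : ℕ}
    (V : Fin k → Fin (m + 1) → ℝ) :
    expVec w v (m + 1) (fun x => gramDet (Fin.cons x V : Fin (k + 1) → Fin (m + 1) → ℝ) ^ 2) =
      (m + 1 - k) * (m + 3 - k) * gramDet V ^ 2 +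
        (μ4 - 3) * ∑ l : Fin (m + 1), gramDet (fun i a => V i (l.succAbove a)) ^ 2 := by
  simp only [gramDet_cons]
  rw [h.expVec_quadratic_sq _ (gramForm_transpose V), gramForm_mul_self, trace_smul,
    gramForm_trace]
  simp only [gramForm_diag, smul_eq_mul]
  push_cast
  ring

/-- The weights may be negative, so that five points suffice for arbitrary `μ3` and `μ4`. -/
theorem exists_hasMoments (μ3 μ4 : ℝ) : ∃ w v : Fin 5 → ℝ, HasMoments w v μ3 μ4 := by
  -- solution of the Vandermonde system at the nodes `-2, …, 2`
  refine ⟨![((μ4 - 1) / 12 - μ3 / 6) / 2, ((4 - μ4) / 3 + μ3 / 3) / 2,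
    1 - (4 - μ4) / 3 - (μ4 - 1) / 12, ((4 - μ4) / 3 - μ3 / 3) / 2,
    ((μ4 - 1) / 12 + μ3 / 6) / 2], ![-2, -1, 0, 1, 2], ⟨fun r hr => ?_⟩⟩
  interval_cases r <;> simp [Fin.sum_univ_succ, colWeight] <;> ring

end Expectation

/-! ### Moments of Gram determinants and marked determinants -/

section Marked

variable {Ω : Type} [Fintype Ω] {w v : Ω → ℝ} {μ3 μ4 : ℝ}

/-- The second moment of the Gram determinant of `k` random vectors in `ℝᵐ` together with the
all-ones vector. -/
noncomputable def gramMoment (w v : Ω → ℝ) (k m : ℕ) : ℝ :=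
  expMat w v k m fun V => gramDet (Fin.cons 1 V : Fin (k + 1) → Fin m → ℝ) ^ 2

/-- The value of `gramMoment w v k m` when `μ4 = 3`, by its recursion in `k`. -/
noncomputable def gaussMoment (m : ℝ) : ℕ → ℝ
  | 0 => m ^ 2
  | k + 1 => gaussMoment m k * ((m - 1 - k) * (m + 1 - k))

theorem gramMoment_zero (m : ℕ) : gramMoment w v 0 m = (m : ℝ) ^ 2 := by
  rw [gramMoment, expMat_zero, gramDet]
  simp [dotProduct]

theorem HasMoments.gramMoment_succ (h : HasMoments w v μ3 μ4) (k m : ℕ) :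
    gramMoment w v (k + 1) (m + 1) =
      (m - k) * (m + 2 - k) * gramMoment w v k (m + 1) +
        (μ4 - 3) * ((m + 1) * gramMoment w v k m) := by
  rw [gramMoment, expMat_succ]
  simp only [gramDet_swap 1, h.expVec_gramDet_sq]
  rw [expMat_add, expMat_const_mul, expMat_const_mul, expMat_sum]
  have : ∀ l : Fin (m + 1), (expMat w v k (m + 1) fun V =>
      gramDet (fun i a => (Fin.cons 1 V : Fin (k + 1) → Fin (m + 1) → ℝ) i (l.succAbove a)) ^ 2) =
      gramMoment w v k m := by
    intro l
    rw [gramMoment, ← expMat_succAbove h.total k m l]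
    congr 1
    funext V
    congr 2
    funext i
    refine Fin.cases ?_ (fun i => ?_) i <;> rfl
  simp only [this, Finset.sum_const, Finset.card_univ, Fintype.card_fin, nsmul_eq_mul]
  rw [← gramMoment]
  push_cast
  ring

/-- Solution of the recursion: `j` of the `k` rows contribute through the excess `μ4 - 3`, each of
them deleting one coordinate. -/
theorem HasMoments.gramMoment_eq (h : HasMoments w v μ3 μ4) (k m : ℕ) (hk : k ≤ m) :
    gramMoment w v k m = ∑ j ∈ range (k + 1),
      (k.choose j : ℝ) * (m.descFactorial j * (μ4 - 3) ^ j * gaussMoment (m - j) (k - j)) := by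
  induction k generalizing m with
  | zero => simp [gramMoment_zero, gaussMoment]
  | succ k ih =>
    obtain ⟨m, rfl⟩ : ∃ m', m = m' + 1 := ⟨m - 1, by omega⟩
    rw [h.gramMoment_succ, ih _ (by omega), ih _ (by omega)]
    rw [Finset.sum_range_succ' _ (k + 1)]
    have pascal : ∀ T : ℕ → ℝ, ∑ j ∈ range (k + 1), ((k + 1).choose (j + 1) : ℝ) * T j =
        ∑ j ∈ range (k + 1), (k.choose j : ℝ) * T j +
          ∑ j ∈ range (k + 1), (k.choose (j + 1) : ℝ) * T j := by
      intro T
      rw [← Finset.sum_add_distrib]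
      refine Finset.sum_congr rfl fun j _ => ?_
      rw [Nat.choose_succ_succ', Nat.cast_add, add_mul]
    rw [pascal]
    have e1 : ∑ j ∈ range (k + 1), (k.choose j : ℝ) * (((m + 1).descFactorial (j + 1) : ℕ) *
        (μ4 - 3) ^ (j + 1) * gaussMoment (((m + 1 : ℕ) : ℝ) - ((j + 1 : ℕ) : ℝ)) (k + 1 - (j + 1)))
        = (μ4 - 3) * ((m + 1) * ∑ j ∈ range (k + 1), (k.choose j : ℝ) *
          (m.descFactorial j * (μ4 - 3) ^ j * gaussMoment (m - j) (k - j))) := by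
      simp only [Finset.mul_sum]
      refine Finset.sum_congr rfl fun j _ => ?_
      rw [Nat.succ_descFactorial_succ, Nat.add_sub_add_right]
      push_cast
      rw [add_sub_add_right_eq_sub]
      ring
    have e2 : ∑ j ∈ range (k + 1), (k.choose (j + 1) : ℝ) * (((m + 1).descFactorial (j + 1) : ℕ) *
        (μ4 - 3) ^ (j + 1) * gaussMoment (((m + 1 : ℕ) : ℝ) - ((j + 1 : ℕ) : ℝ)) (k + 1 - (j + 1)))
        + ((k + 1).choose 0 : ℝ) * (((m + 1).descFactorial 0 : ℕ) *
        (μ4 - 3) ^ 0 * gaussMoment (((m + 1 : ℕ) : ℝ) - ((0 : ℕ) : ℝ)) (k + 1 - 0))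
        = (m - k) * (m + 2 - k) * ∑ j ∈ range (k + 1), (k.choose j : ℝ) *
          ((m + 1).descFactorial j * (μ4 - 3) ^ j * gaussMoment ((m + 1 : ℕ) - j) (k - j)) := by
      have h0 : ((k + 1).choose 0 : ℝ) = (k.choose 0 : ℕ) := by simp
      rw [h0, ← Finset.sum_range_succ' (fun j => (k.choose j : ℝ) * (((m + 1).descFactorial j : ℕ) *
        (μ4 - 3) ^ j * gaussMoment (((m + 1 : ℕ) : ℝ) - (j : ℝ)) (k + 1 - j))),
        Finset.sum_range_succ, Nat.choose_succ_self]
      simp only [Finset.mul_sum, Nat.cast_zero, zero_mul, add_zero]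
      refine Finset.sum_congr rfl fun j hj => ?_
      have hj' : j ≤ k := Nat.lt_succ_iff.1 (Finset.mem_range.1 hj)
      rw [Nat.succ_sub hj', gaussMoment, Nat.cast_sub hj']
      push_cast
      ring
    rw [add_assoc, e1, e2, add_comm]

theorem gaussMoment_two (i : ℕ) : gaussMoment ((i + 2 : ℕ) : ℝ) i * 6 =
    (i + 2 : ℝ) ^ 2 * (i + 1).factorial * (i + 3).factorial := by
  have key : ∀ k d : ℕ, gaussMoment ((k + d + 1 : ℕ) : ℝ) k * (d.factorial * (d + 2).factorial) =
      (k + d + 1 : ℝ) ^ 2 * (k + d).factorial * (k + d + 2).factorial := by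
    intro k
    induction k with
    | zero => intro d; simp [gaussMoment]; ring
    | succ k ih =>
      intro d
      have := ih (d + 1)
      rw [show k + 1 + d + 1 = k + (d + 1) + 1 by ring, gaussMoment,
        show k + 1 + d = k + (d + 1) by ring]
      rw [Nat.factorial_succ (d + 2), Nat.factorial_succ d] at this
      push_cast at this ⊢
      linear_combination this
  have := key i 1
  norm_num [Nat.factorial] at this ⊢
  rw [show (i : ℝ) + 2 = i + 1 + 1 by ring]
  linear_combination this

/-- The determinant of `X` with row `p` replaced by ones. -/
noncomputable def markDet {n : ℕ} (X : Fin n → Fin n → ℝ) (p : Fin n) : ℝ :=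
  (of (Function.update X p 1) : Matrix (Fin n) (Fin n) ℝ).det

theorem markDet_eq_sum {n : ℕ} (X : Fin n → Fin n → ℝ) (p : Fin n) :
    markDet X p = ∑ π : Equiv.Perm (Fin n), ((Equiv.Perm.sign π : ℤ) : ℝ) *
      ∏ i, if p ≠ i then X i (π i) else 1 := by
  rw [markDet, ← det_transpose, det_apply']
  refine Finset.sum_congr rfl fun π _ => ?_
  congr 1
  refine Finset.prod_congr rfl fun i _ => ?_
  by_cases hi : p = i
  · subst hi; simp
  · simp [hi, Function.update_of_ne (Ne.symm hi)]

theorem markDet_perm {n : ℕ} (X : Fin n → Fin n → ℝ) (e : Equiv.Perm (Fin n)) (p : Fin n) :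
    markDet (fun i => X (e i)) p = ((Equiv.Perm.sign e : ℤ) : ℝ) * markDet X (e p) := by
  rw [markDet, markDet, ← det_permute]
  congr 1
  ext i j
  by_cases hi : i = p
  · subst hi; simp
  · simp [Function.update_of_ne hi, Function.update_of_ne (e.injective.ne hi)]

/-- Expanding the four determinants over permutations and averaging entry by entry gives the
signed sum of marked weights. -/
theorem HasMoments.sum_markedWeight (h : HasMoments w v μ3 μ4) (m1 : ℝ) {n : ℕ}
    (s : Fin 4 → Fin n) :
    ∑ π : Fin 4 → Equiv.Perm (Fin n), markedWeight m1 μ3 μ4 π (fun j => some (s j)) =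
      m1 ^ 4 * expMat w v n n fun X => ∏ j, markDet X (s j) := by
  have hdet : ∀ X : Fin n → Fin n → ℝ, ∏ j, markDet X (s j) =
      ∑ π : Fin 4 → Equiv.Perm (Fin n), (∏ j, ((Equiv.Perm.sign (π j) : ℤ) : ℝ)) *
        ∏ i, ∏ l, X i l ^ (univ.filter fun j => s j ≠ i ∧ π j i = l).card := by
    intro X
    simp only [markDet_eq_sum]
    rw [Finset.prod_univ_sum, Fintype.piFinset_univ]
    refine Finset.sum_congr rfl fun π _ => ?_
    rw [Finset.prod_mul_distrib, Finset.prod_comm]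
    congr 1
    refine Finset.prod_congr rfl fun i _ => ?_
    rw [← Finset.prod_filter, ← Finset.prod_fiberwise (g := fun j => π j i)]
    refine Finset.prod_congr rfl fun l _ => ?_
    rw [Finset.filter_filter, ← Finset.prod_const]
    exact Finset.prod_congr rfl fun j hj => by rw [(Finset.mem_filter.1 hj).2.2]
  have hE : ∀ b : Fin n → Fin n → ℕ, (∀ i l, b i l ≤ 4) →
      expMat w v n n (fun X => ∏ i, ∏ l, X i l ^ b i l) =
        ∏ i, ∏ l, colWeight μ3 μ4 (b i l) := by
    intro b hb
    have : ∀ i, ∏ l, colWeight μ3 μ4 (b i l) =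
        ∑ x : Fin n → Ω, ∏ l, (w (x l) * v (x l) ^ b i l) := by
      intro i
      simp only [← h.moment _ (hb i _)]
      rw [Finset.prod_univ_sum, Fintype.piFinset_univ]
    simp only [this]
    rw [Finset.prod_univ_sum, Fintype.piFinset_univ]
    simp only [expMat, Finset.prod_mul_distrib]
  simp only [hdet, expMat_sum, expMat_const_mul, Finset.mul_sum]
  refine Finset.sum_congr rfl fun π _ => ?_
  rw [hE _ fun i l => (Finset.card_le_univ _).trans (by simp), markedWeight,
    Finset.prod_mul_distrib]
  have hm : ∏ i, m1 ^ (univ.filter fun j : Fin 4 => some (s j) = some i).card = m1 ^ 4 := by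
    rw [Finset.prod_pow_eq_pow_sum]
    congr 1
    simp only [Option.some.injEq]
    rw [← Finset.card_eq_sum_card_fiberwise (fun _ _ => Finset.mem_coe.2 (Finset.mem_univ _))]
    simp
  rw [hm]
  simp only [ne_eq, Option.some.injEq]
  ring

/-- Permuting the rows changes each determinant by the same sign, and four signs cancel. -/
theorem expMat_markDet_perm {n : ℕ} (e : Equiv.Perm (Fin n)) (a b c d : Fin n) :
    (expMat w v n n fun X =>
      markDet X (e a) * markDet X (e b) * markDet X (e c) * markDet X (e d)) =
    expMat w v n n fun X => markDet X a * markDet X b * markDet X c * markDet X d := by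
  rw [← expMat_comp_perm w v n n e fun X => markDet X a * markDet X b * markDet X c * markDet X d]
  congr 1
  funext X
  simp only [markDet_perm]
  rcases Int.units_eq_one_or (Equiv.Perm.sign e) with he | he <;> rw [he] <;> simp

theorem exists_perm_pair {k : ℕ} {p q : Fin (k + 2)} (hpq : p ≠ q) :
    ∃ e : Equiv.Perm (Fin (k + 2)), e 0 = p ∧ e 1 = q := by
  refine ⟨Equiv.swap 0 p * Equiv.swap 1 (Equiv.swap 0 p q), ?_, ?_⟩
  · have h : (0 : Fin (k + 2)) ≠ Equiv.swap 0 p q := by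
      intro h
      have := congrArg (Equiv.swap 0 p) h
      rw [Equiv.swap_apply_left, Equiv.swap_apply_self] at this
      exact hpq this
    rw [Equiv.Perm.mul_apply, Equiv.swap_apply_of_ne_of_ne (x := 0) (by simp) h,
      Equiv.swap_apply_left]
  · simp

theorem markDet_zero {k : ℕ} (y : Fin (k + 1) → ℝ) (V : Fin k → Fin (k + 1) → ℝ) :
    markDet (Fin.cons y V : Fin (k + 1) → Fin (k + 1) → ℝ) 0 = (of (Fin.cons 1 V)).det := by
  rw [markDet, Fin.update_cons_zero]

theorem markDet_one {k : ℕ} (y z : Fin (k + 2) → ℝ) (V : Fin k → Fin (k + 2) → ℝ) :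
    markDet (Fin.cons y (Fin.cons z V) : Fin (k + 2) → Fin (k + 2) → ℝ) 1 =
      (of (Fin.cons y (Fin.cons 1 V))).det := by
  rw [markDet, show (1 : Fin (k + 2)) = Fin.succ 0 from rfl, ← Fin.cons_update,
    Fin.update_cons_zero]

/-- The determinant marked at `p` does not involve row `p`, so rows `p` and `q` can be averaged in
the two squared determinants separately; each average is the Gram determinant of the ones vector
and the `n - 2` remaining rows. -/
theorem HasMoments.expMat_two_two (h : HasMoments w v μ3 μ4) {n : ℕ} {p q : Fin n} (hpq : p ≠ q) :
    (expMat w v n n fun X => markDet X p * markDet X p * markDet X q * markDet X q) =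
      gramMoment w v (n - 2) n := by
  obtain ⟨k, rfl⟩ : ∃ k, n = k + 2 := ⟨n - 2, by have := p.2; have := q.2; omega⟩
  obtain ⟨e, rfl, rfl⟩ := exists_perm_pair hpq
  rw [expMat_markDet_perm, expMat_succ, expMat_succ, Nat.add_sub_cancel, gramMoment]
  congr 1
  funext V
  have : ∀ z y : Fin (k + 2) → ℝ,
      markDet (Fin.cons y (Fin.cons z V) : Fin (k + 2) → Fin (k + 2) → ℝ) 0 *
      markDet (Fin.cons y (Fin.cons z V) : Fin (k + 2) → Fin (k + 2) → ℝ) 0 *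
      markDet (Fin.cons y (Fin.cons z V) : Fin (k + 2) → Fin (k + 2) → ℝ) 1 *
      markDet (Fin.cons y (Fin.cons z V) : Fin (k + 2) → Fin (k + 2) → ℝ) 1 =
      gramDet (Fin.cons z (Fin.cons 1 V) : Fin (k + 2) → Fin (k + 2) → ℝ) *
        gramDet (Fin.cons y (Fin.cons 1 V) : Fin (k + 2) → Fin (k + 2) → ℝ) := by
    intro z y
    rw [gramDet_swap z 1, gramDet_square, gramDet_square, markDet_zero, markDet_one]
    ring
  simp only [this, expVec_const_mul, h.expVec_gramDet, mul_comm _ (_ * gramDet _)]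
  push_cast
  ring

/-- Only the last factor involves row `p`, and it is linear in that row, which has mean zero. -/
theorem HasMoments.expMat_three_one (h : HasMoments w v μ3 μ4) {n : ℕ} {p q : Fin n}
    (hpq : p ≠ q) :
    (expMat w v n n fun X => markDet X p * markDet X p * markDet X p * markDet X q) = 0 := by
  obtain ⟨k, rfl⟩ : ∃ k, n = k + 2 := ⟨n - 2, by have := p.2; have := q.2; omega⟩
  obtain ⟨e, rfl, rfl⟩ := exists_perm_pair hpq
  rw [expMat_markDet_perm, expMat_succ, expMat_succ]
  simp only [markDet_zero, markDet_one, expVec_const_mul]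
  have : ∀ V : Fin k → Fin (k + 2) → ℝ, expVec w v (k + 2) (fun y =>
      (of (Fin.cons y (Fin.cons 1 V) : Fin (k + 2) → Fin (k + 2) → ℝ)).det) = 0 := by
    intro V
    have hd : ∀ y : Fin (k + 2) → ℝ,
        (of (Fin.cons y (Fin.cons 1 V) : Fin (k + 2) → Fin (k + 2) → ℝ)).det = ∑ j : Fin (k + 2),
          ((-1) ^ (j : ℕ) * ((of (Fin.cons 1 V : Fin (k + 1) → Fin (k + 2) → ℝ)).submatrix id
            j.succAbove).det) * y j := by
      intro y
      rw [det_succ_row_zero]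
      refine Finset.sum_congr rfl fun j _ => ?_
      have hs : (of (Fin.cons y (Fin.cons 1 V) : Fin (k + 2) → Fin (k + 2) → ℝ)).submatrix
          Fin.succ j.succAbove = (of (Fin.cons 1 V : Fin (k + 1) → Fin (k + 2) → ℝ)).submatrix id
            j.succAbove := by
        ext a b; simp
      rw [hs, of_apply, Fin.cons_zero]
      ring
    simp only [hd, expVec_sum, expVec_const_mul, h.expVec_one, mul_zero, Finset.sum_const_zero]
  simp only [this, mul_zero]
  simp [expVec, expMat]

/-- Among the markings with exactly two marked columns, those with marks split two-two contribute
`gramMoment w v (n - 2) n` and those split three-one contribute nothing. -/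
theorem HasMoments.expMat_marks (h : HasMoments w v μ3 μ4) {n : ℕ} (a b c d : Fin n) :
    (if (univ.filter fun i => ∃ j, ![a, b, c, d] j = i).card = 2 then
      expMat w v n n (fun X => markDet X a * markDet X b * markDet X c * markDet X d) else 0) =
    gramMoment w v (n - 2) n *
      ((if a = b ∧ c = d ∧ a ≠ c then 1 else 0) + (if a = c ∧ b = d ∧ a ≠ b then 1 else 0) +
        (if a = d ∧ b = c ∧ a ≠ b then 1 else 0)) := by
  have hset : (univ.filter fun i => ∃ j, ![a, b, c, d] j = i) = {a, b, c, d} := by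
    ext i
    simp [Fin.exists_fin_succ, eq_comm]
  rw [hset]
  have h22 := fun {p q : Fin n} (hpq : p ≠ q) => h.expMat_two_two hpq
  have h31 := fun {p q : Fin n} (hpq : p ≠ q) => h.expMat_three_one hpq
  by_cases hab : a = b
  · subst hab
    by_cases hcd : c = d
    · subst hcd
      by_cases hac : a = c
      · subst hac; simp
      · simp [hac, h22 hac]
    · by_cases hac : a = c
      · subst hac
        simp [hcd, h31 hcd]
      · by_cases had : a = d
        · subst had
          have := h31 hac
          simp only [mul_assoc, mul_comm (markDet _ c)] at this ⊢
          simp [hac, hcd, this]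
        · simp [hac, had, hcd]
  · by_cases hac : a = c
    · subst hac
      by_cases hbd : b = d
      · subst hbd
        have := h22 hab
        have e : ∀ X : Fin n → Fin n → ℝ, markDet X a * markDet X b * markDet X a * markDet X b =
          markDet X a * markDet X a * markDet X b * markDet X b := fun X => by ring
        simp only [e, this]
        simp [hab]
      · by_cases had : a = d
        · subst had
          have := h31 hab
          have e : ∀ X : Fin n → Fin n → ℝ, markDet X a * markDet X b * markDet X a * markDet X a =
            markDet X a * markDet X a * markDet X a * markDet X b := fun X => by ring
          simp only [e, this]
          simp [hab, Ne.symm hab]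
        · have : ({a, b, a, d} : Finset (Fin n)).card = 3 := by
            rw [Finset.insert_eq_of_mem (by simp)]
            rw [Finset.card_eq_three]
            exact ⟨b, a, d, Ne.symm hab, hbd, had, rfl⟩
          rw [if_neg (by rw [this]; norm_num)]
          simp [hab, hbd, had]
    · by_cases had : a = d
      · subst had
        by_cases hbc : b = c
        · subst hbc
          have := h22 hab
          have e : ∀ X : Fin n → Fin n → ℝ, markDet X a * markDet X b * markDet X b * markDet X a =
            markDet X a * markDet X a * markDet X b * markDet X b := fun X => by ring
          simp only [e, this]
          simp [hab, Ne.symm hab]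
        · have : ({a, b, c, a} : Finset (Fin n)).card = 3 := by
            rw [Finset.insert_eq_of_mem (by simp)]
            rw [Finset.card_eq_three]
            exact ⟨b, c, a, hbc, Ne.symm hab, Ne.symm hac, rfl⟩
          rw [if_neg (by rw [this]; norm_num)]
          simp [hab, hbc, hac]
      · by_cases hbcd : b = c ∧ c = d
        · obtain ⟨rfl, rfl⟩ := hbcd
          have := h31 (Ne.symm hab)
          have e : ∀ X : Fin n → Fin n → ℝ, markDet X a * markDet X b * markDet X b * markDet X b =
            markDet X b * markDet X b * markDet X b * markDet X a := fun X => by ring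
          simp only [e, this]
          simp [hab]
        · have : ({a, b, c, d} : Finset (Fin n)).card ≠ 2 := by
            rw [Finset.card_insert_of_notMem (by simp [hab, hac, had])]
            intro h
            obtain ⟨x, hx⟩ := Finset.card_eq_one.1 (Nat.succ_injective h)
            have hb : b ∈ ({x} : Finset (Fin n)) := hx ▸ (by simp)
            have hc : c ∈ ({x} : Finset (Fin n)) := hx ▸ (by simp)
            have hd : d ∈ ({x} : Finset (Fin n)) := hx ▸ (by simp)
            rw [Finset.mem_singleton] at hb hc hd
            exact hbcd ⟨hb.trans hc.symm, hc.trans hd.symm⟩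
          rw [if_neg this]
          simp [hab, hac, had]

theorem sum_fin_four {α : Type*} [Fintype α] (f : (Fin 4 → α) → ℝ) :
    ∑ s, f s = ∑ a, ∑ b, ∑ c, ∑ d, f ![a, b, c, d] := by
  have step : ∀ (k : ℕ) (g : (Fin (k + 1) → α) → ℝ),
      ∑ s, g s = ∑ a, ∑ s : Fin k → α, g (vecCons a s) := by
    intro k g
    rw [← (Fin.consEquiv fun _ => α).sum_comp, Fintype.sum_prod_type]
    rfl
  simp only [step, Finset.univ_unique, Finset.sum_singleton]
  rfl

/-- There are `3 n (n - 1)` markings with marks split two-two. -/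
theorem HasMoments.s42_eq (h : HasMoments w v μ3 μ4) (m1 : ℝ) (n : ℕ) :
    (∑ p ∈ Finset.univ.filter
          (fun p : (Fin 4 → Equiv.Perm (Fin n)) × (Fin 4 → Option (Fin n)) =>
            (∀ j : Fin 4, p.2 j ≠ none) ∧
              (Finset.univ.filter (fun i : Fin n => ∃ j : Fin 4, p.2 j = some i)).card = 2),
        markedWeight m1 μ3 μ4 p.1 p.2) =
      m1 ^ 4 * (3 * n * (n - 1)) * gramMoment w v (n - 2) n := by
  rw [Finset.sum_filter, Fintype.sum_prod_type, Finset.sum_comm]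
  have e1 : ∑ s : Fin 4 → Fin n, (if (univ.filter fun i => ∃ j, s j = i).card = 2 then
      ∑ π : Fin 4 → Equiv.Perm (Fin n), markedWeight m1 μ3 μ4 π (fun j => some (s j)) else 0) =
      ∑ s : Fin 4 → Option (Fin n), ∑ π : Fin 4 → Equiv.Perm (Fin n),
        if (∀ j : Fin 4, s j ≠ none) ∧
          (univ.filter fun i : Fin n => ∃ j : Fin 4, s j = some i).card = 2
        then markedWeight m1 μ3 μ4 π s else 0 := by
    refine Finset.sum_of_injOn (fun s j => some (s j)) ?_ (fun _ _ => by simp) ?_ ?_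
    · intro s _ s' _ hs
      funext j
      exact Option.some_injective _ (congrFun hs j)
    · intro s _ hs
      refine Finset.sum_eq_zero fun π _ => if_neg fun hs' => hs ?_
      choose g hg using fun j => Option.ne_none_iff_exists'.1 (hs'.1 j)
      exact ⟨g, by simp, funext fun j => (hg j).symm⟩
    · intro s _
      simp only [ne_eq, reduceCtorEq, not_false_eq_true, implies_true, true_and,
        Option.some.injEq]
      split_ifs <;> simp
  refine e1.symm.trans ?_
  simp only [h.sum_markedWeight]
  rw [sum_fin_four]
  have e2 : ∀ a b c d : Fin n,
      (if (univ.filter fun i => ∃ j, ![a, b, c, d] j = i).card = 2 then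
      m1 ^ 4 * expMat w v n n (fun X => ∏ j, markDet X (![a, b, c, d] j)) else 0) =
      m1 ^ 4 * (gramMoment w v (n - 2) n *
      ((if a = b ∧ c = d ∧ a ≠ c then 1 else 0) + (if a = c ∧ b = d ∧ a ≠ b then 1 else 0) +
        (if a = d ∧ b = c ∧ a ≠ b then 1 else 0))) := by
    intro a b c d
    rw [← h.expMat_marks, mul_ite, mul_zero]
    simp [Fin.prod_univ_succ, mul_assoc]
  simp only [e2, ← Finset.mul_sum]
  have e3 : ∑ a : Fin n, ∑ b : Fin n, (if a ≠ b then (1:ℝ) else 0) = n * (n - 1) := by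
    simp only [ne_eq, ite_not]
    have : ∀ a b : Fin n, (if a = b then (0:ℝ) else 1) = 1 - if a = b then 1 else 0 := by
      intro a b; split_ifs <;> simp
    simp only [this, Finset.sum_sub_distrib, Finset.sum_ite_eq]
    simp
    ring
  have f1 : ∑ a : Fin n, ∑ b : Fin n, ∑ c : Fin n, ∑ d : Fin n,
      (if a = b ∧ c = d ∧ a ≠ c then (1:ℝ) else 0) = n * (n - 1) := by
    rw [← e3]
    simp only [ite_and, Finset.sum_ite_eq, Finset.sum_ite_irrel, Finset.sum_const_zero,
      Finset.mem_univ, if_true]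
  have f2 : ∑ a : Fin n, ∑ b : Fin n, ∑ c : Fin n, ∑ d : Fin n,
      (if a = c ∧ b = d ∧ a ≠ b then (1:ℝ) else 0) = n * (n - 1) := by
    rw [← e3]
    simp only [ite_and, Finset.sum_ite_eq, Finset.sum_ite_irrel, Finset.sum_const_zero,
      Finset.mem_univ, if_true]
  have f3 : ∑ a : Fin n, ∑ b : Fin n, ∑ c : Fin n, ∑ d : Fin n,
      (if a = d ∧ b = c ∧ a ≠ b then (1:ℝ) else 0) = n * (n - 1) := by
    rw [← e3]
    simp only [ite_and, Finset.sum_ite_eq, Finset.mem_univ, if_true]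
  simp only [Finset.sum_add_distrib, f1, f2, f3]
  ring

end Marked

/-! ### Generating function -/

section Series

theorem hasSum_gaussian_series (t : ℝ) (ht : |t| < 1) :
    HasSum (fun i : ℕ => (i + 2 : ℝ) ^ 2 * (i + 1) * (i + 3) / 2 * t ^ i)
      (6 * (1 + t) / (1 - t) ^ 5) := by
  have h1 : HasSum (fun i : ℕ => ((i + 4).choose 4 : ℝ) * t ^ i) (1 / (1 - t) ^ 5) :=
    hasSum_choose_mul_geometric_of_norm_lt_one 4 (by simpa using ht)
  have h2 : HasSum (fun i : ℕ => ((i + 3).choose 4 : ℝ) * t ^ i) (t * (1 / (1 - t) ^ 5)) := by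
    rw [← hasSum_nat_add_iff' 1]
    simp only [Finset.range_one, Finset.sum_singleton, zero_add, Nat.choose_eq_zero_of_lt
      (show 3 < 4 by norm_num), Nat.cast_zero, zero_mul, sub_zero]
    refine (h1.mul_left t).congr_fun fun i => ?_
    rw [show i + 1 + 3 = i + 4 by ring]
    ring
  have h3 := (h1.add h2).mul_left 6
  have hS : 6 * (1 / (1 - t) ^ 5 + t * (1 / (1 - t) ^ 5)) = 6 * (1 + t) / (1 - t) ^ 5 := by ring
  rw [hS] at h3
  refine h3.congr_fun fun i => ?_
  have c1 : ((i + 4).choose 4 : ℝ) * 24 = (i + 1) * (i + 2) * (i + 3) * (i + 4) := by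
    have := Nat.descFactorial_eq_factorial_mul_choose (i + 4) 4
    simp [Nat.descFactorial, Nat.factorial] at this
    have := congrArg (Nat.cast : ℕ → ℝ) this
    push_cast at this
    linear_combination -this
  have c2 : ((i + 3).choose 4 : ℝ) * 24 = i * (i + 1) * (i + 2) * (i + 3) := by
    have := Nat.descFactorial_eq_factorial_mul_choose (i + 3) 4
    simp [Nat.descFactorial, Nat.factorial] at this
    have := congrArg (Nat.cast : ℕ → ℝ) this
    push_cast at this
    linear_combination -this
  linear_combination (-t ^ i / 4) * (c1 + c2)

theorem series_coeff {Ω : Type} [Fintype Ω] {w v : Ω → ℝ} {μ3 μ4 : ℝ}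
    (h : HasMoments w v μ3 μ4) (t : ℝ) (k : ℕ) :
    3 * ((k + 2 : ℕ) : ℝ) * ((k + 2 : ℕ) - 1) * gramMoment w v k (k + 2) * t ^ k /
      ((k + 2).factorial : ℝ) ^ 2 =
    ∑ j ∈ range (k + 1), (t * (μ4 - 3)) ^ j / (j.factorial : ℝ) *
      (((k - j : ℕ) + 2 : ℝ) ^ 2 * ((k - j : ℕ) + 1) * ((k - j : ℕ) + 3) / 2 * t ^ (k - j)) := by
  rw [h.gramMoment_eq k (k + 2) (by omega), Finset.mul_sum, Finset.sum_mul, Finset.sum_div]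
  refine Finset.sum_congr rfl fun j hj => ?_
  obtain ⟨i, rfl⟩ : ∃ i, k = j + i :=
    ⟨k - j, by have := Finset.mem_range.1 hj; omega⟩
  have hg := gaussMoment_two i
  have hc : ((j + i).choose j : ℝ) * (j.factorial * i.factorial) = (j + i).factorial := by
    have := Nat.add_choose_mul_factorial_mul_factorial j i
    rw [← this, ← Nat.choose_symm_add]; push_cast; ring
  have hd : ((j + i + 2).descFactorial j : ℝ) * (i + 2).factorial = (j + i + 2).factorial := by
    have := Nat.factorial_mul_descFactorial (show j ≤ j + i + 2 by omega)
    rw [show j + i + 2 - j = i + 2 by omega] at this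
    rw [← this]; push_cast; ring
  rw [Nat.add_sub_cancel_left, show ((j + i + 2 : ℕ) : ℝ) - (j : ℝ) = ((i + 2 : ℕ) : ℝ) by
    push_cast; ring]
  have p1 : (j.factorial : ℝ) ≠ 0 := by positivity
  have p2 : (i.factorial : ℝ) ≠ 0 := by positivity
  have p3 : ((i + 2).factorial : ℝ) ≠ 0 := by positivity
  have p4 : ((j + i).factorial : ℝ) ≠ 0 := by positivity
  have hc' : ((j + i).choose j : ℝ) = (j + i).factorial / (j.factorial * i.factorial) := by
    rw [eq_div_iff (mul_ne_zero p1 p2), hc]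
  have hd' : ((j + i + 2).descFactorial j : ℝ) = (j + i + 2).factorial / (i + 2).factorial := by
    rw [eq_div_iff p3, hd]
  have hg' : gaussMoment ((i + 2 : ℕ) : ℝ) i =
    (i + 2 : ℝ) ^ 2 * (i + 1).factorial * (i + 3).factorial / 6 := by linarith
  rw [mul_pow, hc', hd', hg', Nat.factorial_succ (j + i + 1), Nat.factorial_succ (j + i),
    Nat.factorial_succ (i + 2), Nat.factorial_succ (i + 1), Nat.factorial_succ i]
  push_cast
  field_simp
  ring

end Series

theorem S42_generating_function (m1 μ3 μ4 : ℝ) (t : ℝ) (ht : |t| < 1) :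
    HasSum (fun n : ℕ =>
      (∑ p ∈ Finset.univ.filter
          (fun p : (Fin 4 → Equiv.Perm (Fin n)) × (Fin 4 → Option (Fin n)) =>
            (∀ j : Fin 4, p.2 j ≠ none) ∧
              (Finset.univ.filter (fun i : Fin n => ∃ j : Fin 4, p.2 j = some i)).card = 2),
        markedWeight m1 μ3 μ4 p.1 p.2)
        * t ^ n / (Nat.factorial n : ℝ) ^ 2)
      (6 * m1 ^ 4 * t ^ 2 * (1 + t) * Real.exp (t * (μ4 - 3)) / (1 - t) ^ 5) := by
  obtain ⟨w, v, h⟩ := exists_hasMoments μ3 μ4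
  simp only [h.s42_eq]
  have hA : HasSum (fun j : ℕ => (t * (μ4 - 3)) ^ j / (j.factorial : ℝ))
      (Real.exp (t * (μ4 - 3))) := by
    rw [Real.exp_eq_exp_ℝ]
    exact NormedSpace.expSeries_div_hasSum_exp _
  have hB := hasSum_gaussian_series t ht
  have hAB := hasSum_sum_range_mul_of_summable_norm' hA.summable.norm hA.summable
    hB.summable.norm hB.summable
  rw [hA.tsum_eq, hB.tsum_eq] at hAB
  -- the terms `n = 0, 1` vanish because of the factor `n * (n - 1)`
  rw [← hasSum_nat_add_iff' 2]
  have h0 : ∑ n ∈ range 2, m1 ^ 4 * (3 * (n : ℝ) * (n - 1)) * gramMoment w v (n - 2) n * t ^ n /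
      (n.factorial : ℝ) ^ 2 = 0 := by
    simp [Finset.sum_range_succ]
  rw [h0, sub_zero]
  have hS : 6 * m1 ^ 4 * t ^ 2 * (1 + t) * Real.exp (t * (μ4 - 3)) / (1 - t) ^ 5 =
      m1 ^ 4 * t ^ 2 * (Real.exp (t * (μ4 - 3)) * (6 * (1 + t) / (1 - t) ^ 5)) := by ring
  rw [hS]
  refine (hAB.mul_left _).congr_fun fun k => ?_
  rw [← series_coeff h t k, Nat.add_sub_cancel]
  ring
end
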